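/- arXiv:2203.06268 — 2 statements merged into one kernel-verified Lean document; each statement's English description precedes it below -/
import Mathlib

section
/- For all sufficiently large n, C₀(n) ≥ exp(−n·α^{1/4}) · n! · (∏_{p prime, p > 2} (p−1)^{2(1−1/p)} / (p·(p−2)^{1−2/p}))^n. -/
open Real

/-- `k = k(n) = 2^{-5} (log n / log log n)^{1/2}`. -/
noncomputable def kp (n : ℕ) : ℝ :=
  (2 : ℝ) ^ (-5 : ℤ) * Real.sqrt (Real.log n / Real.log (Real.log n))

/-- `α = α(n) = exp(−k log k)`. -/
noncomputable def ap (n : ℕ) : ℝ := Real.exp (-(kp n * Real.log (kp n)))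

/-- `C₀(n)`: the number of bijections `f` from the first `n` odd positive integers
`{1, 3, …, 2n−1}` to `{1, …, n}` with `gcd(j, f(j)) = 1` for all `j`. -/
noncomputable def coprimeOddBijCount (n : ℕ) : ℕ :=
  Nat.card {f : Fin n ≃ Fin n // ∀ j : Fin n, Nat.gcd (2 * j.1 + 1) ((f j).1 + 1) = 1}

/-- The constant `∏_{p > 2 prime} (p−1)^{2(1−1/p)} / (p·(p−2)^{1−2/p})` (real powers). -/
noncomputable def coprimeConstOdd : ℝ :=
  ∏' p : {p : Nat.Primes // 2 < (p : ℕ)},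
    (((p.1 : ℕ) : ℝ) - 1) ^ (2 * (1 - 1 / ((p.1 : ℕ) : ℝ))) /
      (((p.1 : ℕ) : ℝ) * (((p.1 : ℕ) : ℝ) - 2) ^ (1 - 2 / ((p.1 : ℕ) : ℝ)))

/-!
`C₀(n)` is the permanent of the `0`-`1` matrix of coprimality between `{1, …, n}` and the first `n`
odd numbers. About `n ∏ (1 - 1 / p)` columns, with `p` over the odd primes dividing `u`, are coprime
to a given `u`. Scaling each row and each column by `w(m) = ∏ (p - 1) / (p - 2)`, over the odd
primes `p ∣ m`, balances these densities: `∑ w(m)` over `m` coprime to `u` is about `n K / w(u)`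
with the Euler product `K = ∏ (1 + 1 / (p (p - 2)))`, so after division by `n K` all row and column
sums are `1 + O(n ^ (-1 + ε))`. Any two columns have many common neighbours, and a small flow along
these makes the matrix exactly doubly stochastic. Its permanent is then at least `exp (-n)` by
Gurvits' argument with stable polynomials. The weights have geometric mean
`G = ∏ (1 + 1 / (p - 2)) ^ (1 / p)` on either side, so undoing the scaling leaves the factor
`n ^ n * exp (-n) * (K / G ^ 2) ^ n`, and `K / G ^ 2` is `coprimeConstOdd`.

Every error made is `exp (O(n ^ ε))`, while `n α ^ (1 / 4)` exceeds `n ^ (1 / 2)`.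
-/

section

open Finset Filter Topology

/-! ### Univariate real-rooted polynomials -/

theorem eval_derivative_ne_zero_of_forall_im_nonneg {P : Polynomial ℂ} (hdeg : 0 < P.degree)
    (hP : ∀ z : ℂ, 0 ≤ z.im → P.eval z ≠ 0) {z : ℂ} (hz : 0 ≤ z.im) :
    P.derivative.eval z ≠ 0 := by
  intro h
  have hP' : P.derivative ≠ 0 :=
    Polynomial.derivative_ne_zero.2 (Polynomial.natDegree_pos_iff_degree_pos.2 hdeg).ne'
  have hroots : P.rootSet ℂ ⊆ {w | w.im < 0} := fun w hw => by
    by_contra hw'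
    exact hP w (not_lt.1 hw') (by simpa using (Polynomial.mem_rootSet.1 hw).2)
  have hull := convexHull_min hroots (convex_halfSpace_im_lt 0)
  have hz' := Polynomial.rootSet_derivative_subset_convexHull_rootSet hdeg
    (Polynomial.mem_rootSet.2 ⟨hP', by simpa using h⟩)
  exact (hull hz').not_ge hz

theorem splits_of_forall_im_pos {R : Polynomial ℝ}
    (h : ∀ z : ℂ, 0 < z.im → Polynomial.aeval z R ≠ 0) : R.Splits := by
  refine .of_splits_map Complex.ofRealHom (IsAlgClosed.splits _) fun z hz => ?_
  have hz : Polynomial.aeval z R = 0 := by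
    rw [Polynomial.aeval_def, ← Polynomial.eval_map]
    exact Polynomial.isRoot_of_mem_roots hz
  have him : z.im = 0 := by
    refine le_antisymm (not_lt.1 fun hpos => h z hpos hz) (not_lt.1 fun hneg => ?_)
    exact h (starRingEnd ℂ z) (by simpa using hneg) (by rw [Polynomial.aeval_conj, hz, map_zero])
  exact ⟨z.re, Complex.ext (by simp) (by simp [him])⟩

theorem neg_of_mem_roots_of_coeff_nonneg {R : Polynomial ℝ} (hnn : ∀ i, 0 ≤ R.coeff i)
    (h0 : 0 < R.coeff 0) {r : ℝ} (hr : r ∈ R.roots) : r < 0 := by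
  by_contra! hr0
  have hle : R.coeff 0 * r ^ 0 ≤ R.eval r := by
    rw [Polynomial.eval_eq_sum_range]
    exact single_le_sum (f := fun i => R.coeff i * r ^ i)
      (fun i _ => mul_nonneg (hnn i) (pow_nonneg hr0 i)) (by simp)
  rw [(Polynomial.mem_roots'.1 hr).2.eq_zero] at hle
  linarith

theorem eval_le_coeff_zero_mul_exp {R : Polynomial ℝ} (hR : R.Splits)
    (hnn : ∀ i, 0 ≤ R.coeff i) (h0 : 0 < R.coeff 0) {t : ℝ} (ht : 0 ≤ t) :
    R.eval t ≤ R.coeff 0 * exp (t * (R.coeff 1 / R.coeff 0)) := by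
  have hneg : ∀ r ∈ R.roots, r < 0 := fun r => neg_of_mem_roots_of_coeff_nonneg hnn h0
  have hlog : R.coeff 1 / R.coeff 0 = (R.roots.map fun r => 1 / (0 - r)).sum := by
    have h0e : R.eval 0 ≠ 0 := by rw [← Polynomial.coeff_zero_eq_eval_zero]; exact h0.ne'
    rw [← hR.eval_derivative_div_eval_of_ne_zero h0e, ← Polynomial.coeff_zero_eq_eval_zero,
      ← Polynomial.coeff_zero_eq_eval_zero, Polynomial.coeff_derivative]
    simp
  have hfactor : ∀ r < 0, t - r ≤ (0 - r) * exp (t * (1 / (0 - r))) := fun r hr => by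
    have hr' : 0 < 0 - r := by linarith
    calc t - r = (0 - r) * (t * (1 / (0 - r)) + 1) := by field_simp; ring
      _ ≤ _ := by gcongr; exact add_one_le_exp _
  have hprod : (R.roots.map (t - ·)).prod ≤
      (R.roots.map (0 - ·)).prod * exp (t * (R.roots.map fun r => 1 / (0 - r)).sum) := by
    rw [← Multiset.sum_map_mul_left, exp_multiset_sum, Multiset.map_map, ← Multiset.prod_map_mul]
    exact Multiset.prod_map_le_prod_map₀ _ _ (fun r hr => by linarith [hneg r hr])
      fun r hr => hfactor r (hneg r hr)
  have hlead : 0 ≤ R.leadingCoeff := hnn _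
  calc R.eval t = R.leadingCoeff * (R.roots.map (t - ·)).prod := hR.eval_eq_prod_roots t
    _ ≤ R.leadingCoeff * ((R.roots.map (0 - ·)).prod *
        exp (t * (R.roots.map fun r => 1 / (0 - r)).sum)) := by gcongr
    _ = R.coeff 0 * exp (t * (R.coeff 1 / R.coeff 0)) := by
      rw [hlog, Polynomial.coeff_zero_eq_eval_zero, hR.eval_eq_prod_roots 0, mul_assoc]

theorem le_coeff_one_of_mul_le_eval {R : Polynomial ℝ} (h0 : R.coeff 0 = 0) {C : ℝ}
    (hC : ∀ t : ℝ, 0 < t → C * t ≤ R.eval t) : C ≤ R.coeff 1 := by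
  have hdiv : ∀ t : ℝ, 0 < t → C ≤ R.divX.eval t := fun t ht => by
    have h := hC t ht
    rw [← Polynomial.X_mul_divX_add R, h0] at h
    simp only [map_zero, add_zero, Polynomial.eval_mul, Polynomial.eval_X] at h
    exact le_of_mul_le_mul_left (by linarith) ht
  have hlim : Tendsto (fun t => R.divX.eval t) (𝓝[>] 0) (𝓝 (R.coeff 1)) := by
    have h : R.coeff 1 = R.divX.eval 0 := by
      rw [← Polynomial.coeff_zero_eq_eval_zero, Polynomial.coeff_divX]
    rw [h]
    exact (R.divX.continuous.tendsto 0).mono_left nhdsWithin_le_nhds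
  exact ge_of_tendsto hlim (by filter_upwards [self_mem_nhdsWithin] with t ht using hdiv t ht)

theorem mul_exp_neg_one_le_coeff_one {R : Polynomial ℝ} (hR : R.Splits)
    (hnn : ∀ i, 0 ≤ R.coeff i) {C : ℝ} (hC : ∀ t : ℝ, 0 < t → C * t ≤ R.eval t) :
    C * exp (-1) ≤ R.coeff 1 := by
  rcases (hnn 0).eq_or_lt' with h0 | h0
  · have hC1 := le_coeff_one_of_mul_le_eval h0 hC
    calc C * exp (-1) ≤ R.coeff 1 * exp (-1) := by gcongr
      _ ≤ R.coeff 1 := mul_le_of_le_one_right (hnn 1) (by simp)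
  · refine le_of_forall_pos_le_add fun ε hε => ?_
    have hpos : 0 < R.coeff 1 + ε := add_pos_of_nonneg_of_pos (hnn 1) hε
    set t := R.coeff 0 / (R.coeff 1 + ε)
    have ht : 0 < t := div_pos h0 hpos
    have hexp : t * (R.coeff 1 / R.coeff 0) ≤ 1 := by
      rw [div_mul_div_cancel₀' h0.ne', div_le_one hpos]
      linarith
    have hle : C * t ≤ R.coeff 0 * exp 1 :=
      (hC t ht).trans ((eval_le_coeff_zero_mul_exp hR hnn h0 ht.le).trans (by gcongr))
    have hCe : C ≤ (R.coeff 1 + ε) * exp 1 := by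
      rw [← mul_div_assoc, div_le_iff₀ hpos] at hle
      exact le_of_mul_le_mul_right (by linarith) h0
    calc C * exp (-1) ≤ (R.coeff 1 + ε) * exp 1 * exp (-1) := by gcongr
      _ = R.coeff 1 + ε := by rw [mul_assoc, ← exp_add]; simp

/-! ### Stable polynomials and capacity -/

/-- Strict stability of a real polynomial: it has no zeros in the closed upper half-space, except
possibly at real points. -/
def StrictlyStable {σ : Type*} (p : MvPolynomial σ ℝ) : Prop :=
  ∀ z : σ → ℂ, (∀ i, 0 ≤ (z i).im) → (∃ i, 0 < (z i).im) → MvPolynomial.aeval z p ≠ 0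

theorem aeval_cons_eq_eval_map_finSuccEquiv {R A : Type*} [CommSemiring R] [CommSemiring A]
    [Algebra R A] {n : ℕ} (p : MvPolynomial (Fin (n + 1)) R) (z : Fin n → A) (t : A) :
    MvPolynomial.aeval (Fin.cons t z : Fin (n + 1) → A) p =
      ((MvPolynomial.finSuccEquiv R n p).map
        (MvPolynomial.aeval z : MvPolynomial (Fin n) R →ₐ[R] A).toRingHom).eval t := by
  induction p using MvPolynomial.induction_on with
  | C a => simp [MvPolynomial.finSuccEquiv_apply]
  | add p q hp hq => simp [hp, hq]
  | mul_X p i hp =>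
    rw [map_mul, hp, map_mul, Polynomial.map_mul, Polynomial.eval_mul]
    congr 1
    cases i using Fin.cases with
    | zero => simp [MvPolynomial.finSuccEquiv_X_zero]
    | succ j => simp [MvPolynomial.finSuccEquiv_X_succ]

theorem StrictlyStable.aeval_cons_ne_zero {n : ℕ} {p : MvPolynomial (Fin (n + 1)) ℝ}
    (hp : StrictlyStable p) {z : Fin n → ℂ} {t : ℂ} (hz : ∀ i, 0 ≤ (z i).im) (ht : 0 ≤ t.im)
    (hpos : 0 < t.im ∨ ∃ i, 0 < (z i).im) :
    MvPolynomial.aeval (Fin.cons t z : Fin (n + 1) → ℂ) p ≠ 0 := by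
  refine hp _ (Fin.cases (by simpa using ht) fun i => by simpa using hz i) ?_
  rcases hpos with ht' | ⟨i, hi⟩
  · exact ⟨0, by simpa using ht'⟩
  · exact ⟨i.succ, by simpa using hi⟩

theorem StrictlyStable.aeval_coeff_finSuccEquiv_ne_zero {n d : ℕ}
    {p : MvPolynomial (Fin (n + 1)) ℝ} (hp : StrictlyStable p) (hhom : p.IsHomogeneous d)
    (z : Fin n → ℂ) : MvPolynomial.aeval z ((MvPolynomial.finSuccEquiv ℝ n p).coeff d) ≠ 0 := by
  set F := MvPolynomial.finSuccEquiv ℝ n p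
  have hcoeff : ∀ i j, i + j = d → (F.coeff i).IsHomogeneous j := fun i j h =>
    hhom.finSuccEquiv_coeff_isHomogeneous i j h
  have hdeg : F.natDegree < d + 1 := by
    have hF : F.natDegree = p.degreeOf 0 := MvPolynomial.natDegree_finSuccEquiv p
    have := MvPolynomial.degreeOf_le_totalDegree p 0
    have := hhom.totalDegree_le
    omega
  have hlow : ∀ i < d, MvPolynomial.aeval (0 : Fin n → ℂ) (F.coeff i) = 0 := fun i hi => by
    rw [MvPolynomial.aeval_zero, MvPolynomial.constantCoeff_eq,
      (hcoeff i (d - i) (by omega)).coeff_eq_zero (by simp; omega), map_zero]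
  have hconst : F.coeff d = MvPolynomial.C ((F.coeff d).coeff 0) :=
    MvPolynomial.totalDegree_eq_zero_iff_eq_C.1 (Nat.le_zero.1 (hcoeff d 0 rfl).totalDegree_le)
  have hzero : MvPolynomial.aeval (0 : Fin n → ℂ) (F.coeff d) ≠ 0 := fun h => by
    refine hp.aeval_cons_ne_zero (z := 0) (t := Complex.I) (by simp) (by simp) (.inl (by simp)) ?_
    rw [aeval_cons_eq_eval_map_finSuccEquiv, Polynomial.eval_map,
      Polynomial.eval₂_eq_sum_range' _ hdeg, sum_range_succ,
      sum_eq_zero fun i hi => ?_]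
    · simp [h]
    · simp [hlow i (mem_range.1 hi)]
  rw [hconst] at hzero ⊢
  simpa using hzero

theorem StrictlyStable.coeff_one_finSuccEquiv {n d : ℕ} {p : MvPolynomial (Fin (n + 1)) ℝ}
    (hp : StrictlyStable p) (hhom : p.IsHomogeneous d) (hd : 0 < d) :
    StrictlyStable ((MvPolynomial.finSuccEquiv ℝ n p).coeff 1) := by
  intro z hz hpos
  set P := (MvPolynomial.finSuccEquiv ℝ n p).map
    (MvPolynomial.aeval z : MvPolynomial (Fin n) ℝ →ₐ[ℝ] ℂ).toRingHom with hP
  have hcoeff : ∀ i, P.coeff i =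
      MvPolynomial.aeval z ((MvPolynomial.finSuccEquiv ℝ n p).coeff i) := fun i => by
    rw [hP, Polynomial.coeff_map]; rfl
  have hdeg : 0 < P.degree := by
    refine Polynomial.natDegree_pos_iff_degree_pos.1 (hd.trans_le ?_)
    refine Polynomial.le_natDegree_of_ne_zero ?_
    rw [hcoeff]
    exact hp.aeval_coeff_finSuccEquiv_ne_zero hhom z
  have hroots : ∀ t : ℂ, 0 ≤ t.im → P.eval t ≠ 0 := fun t ht => by
    rw [hP, ← aeval_cons_eq_eval_map_finSuccEquiv]
    exact hp.aeval_cons_ne_zero hz ht (.inr hpos)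
  have hderiv := eval_derivative_ne_zero_of_forall_im_nonneg hdeg hroots (z := 0) (by simp)
  rw [← Polynomial.coeff_zero_eq_eval_zero, Polynomial.coeff_derivative] at hderiv
  rw [← hcoeff]
  simpa using hderiv

theorem StrictlyStable.splits_map_eval {n : ℕ} {p : MvPolynomial (Fin (n + 1)) ℝ}
    (hp : StrictlyStable p) (x : Fin n → ℝ) :
    ((MvPolynomial.finSuccEquiv ℝ n p).map (MvPolynomial.eval x)).Splits := by
  refine splits_of_forall_im_pos fun t ht => ?_
  have hcomp : (algebraMap ℝ ℂ).comp (MvPolynomial.eval x) =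
      (MvPolynomial.aeval fun i => (x i : ℂ) : MvPolynomial (Fin n) ℝ →ₐ[ℝ] ℂ).toRingHom :=
    MvPolynomial.ringHom_ext (by simp) (by simp)
  rw [Polynomial.aeval_def, ← Polynomial.eval_map, Polynomial.map_map, hcomp,
    ← aeval_cons_eq_eval_map_finSuccEquiv]
  exact hp.aeval_cons_ne_zero (by simp) ht.le (.inl ht)

theorem eval_nonneg_of_coeff_nonneg {σ : Type*} {p : MvPolynomial σ ℝ}
    (hp : ∀ m, 0 ≤ p.coeff m) {x : σ → ℝ} (hx : ∀ i, 0 ≤ x i) : 0 ≤ MvPolynomial.eval x p := by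
  rw [MvPolynomial.eval_eq]
  exact sum_nonneg fun d _ => mul_nonneg (hp _) (prod_nonneg fun i _ => pow_nonneg (hx i) _)

-- Gurvits: extracting the linear coefficient in one variable loses at most a factor `e` of the
-- capacity `inf p(x) / ∏ xᵢ`.
theorem StrictlyStable.mul_exp_neg_one_le_eval_coeff_one {n : ℕ}
    {p : MvPolynomial (Fin (n + 1)) ℝ} (hp : StrictlyStable p) (hnn : ∀ m, 0 ≤ p.coeff m) {C : ℝ}
    (hC : ∀ x : Fin (n + 1) → ℝ, (∀ i, 0 < x i) → C * ∏ i, x i ≤ MvPolynomial.eval x p)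
    {x : Fin n → ℝ} (hx : ∀ i, 0 < x i) :
    C * exp (-1) * ∏ i, x i ≤
      MvPolynomial.eval x ((MvPolynomial.finSuccEquiv ℝ n p).coeff 1) := by
  rw [← Polynomial.coeff_map, mul_right_comm]
  refine mul_exp_neg_one_le_coeff_one (hp.splits_map_eval x) (fun i => ?_) fun t ht => ?_
  · rw [Polynomial.coeff_map]
    refine eval_nonneg_of_coeff_nonneg (fun m => ?_) fun j => (hx j).le
    rw [MvPolynomial.finSuccEquiv_coeff_coeff]
    exact hnn _
  · have h := hC (Fin.cons t x) (Fin.cases (by simpa using ht) (by simpa using hx))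
    rw [MvPolynomial.eval_eq_eval_mv_eval', Fin.prod_univ_succ] at h
    simp only [Fin.cons_zero, Fin.cons_succ] at h
    linarith

theorem StrictlyStable.mul_exp_neg_le_coeff_one {n : ℕ} {p : MvPolynomial (Fin n) ℝ}
    (hp : StrictlyStable p) (hhom : p.IsHomogeneous n) (hnn : ∀ m, 0 ≤ p.coeff m) {C : ℝ}
    (hC : ∀ x : Fin n → ℝ, (∀ i, 0 < x i) → C * ∏ i, x i ≤ MvPolynomial.eval x p) :
    C * exp (-(n : ℝ)) ≤ p.coeff (Finsupp.equivFunOnFinite.symm 1) := by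
  induction n generalizing C with
  | zero =>
    have h := hC 0 (fun i => i.elim0)
    rw [MvPolynomial.eq_C_of_isEmpty p] at h ⊢
    simpa [Subsingleton.elim (Finsupp.equivFunOnFinite.symm 1) (0 : Fin 0 →₀ ℕ)] using h
  | succ n ih =>
    have hones : (Finsupp.equivFunOnFinite.symm 1 : Fin (n + 1) →₀ ℕ) =
        Finsupp.cons 1 (Finsupp.equivFunOnFinite.symm 1) :=
      Finsupp.ext (Fin.cases (by simp) (by simp))
    have hexp : C * exp (-((n + 1 : ℕ) : ℝ)) = C * exp (-1) * exp (-(n : ℝ)) := by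
      rw [mul_assoc, ← exp_add]
      push_cast
      ring_nf
    rw [hexp, hones, ← MvPolynomial.finSuccEquiv_coeff_coeff]
    refine ih (hp.coeff_one_finSuccEquiv hhom n.succ_pos)
      (hhom.finSuccEquiv_coeff_isHomogeneous 1 n (by omega)) (fun m => ?_)
      fun x hx => hp.mul_exp_neg_one_le_eval_coeff_one hnn hC hx
    rw [MvPolynomial.finSuccEquiv_coeff_coeff]
    exact hnn _

/-! ### Permanents of doubly stochastic matrices -/

theorem prod_monomial {κ σ R : Type*} [CommSemiring R] (t : Finset κ) (m : κ → σ →₀ ℕ)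
    (a : κ → R) :
    ∏ i ∈ t, MvPolynomial.monomial (m i) (a i) =
      MvPolynomial.monomial (∑ i ∈ t, m i) (∏ i ∈ t, a i) := by
  classical
  induction t using Finset.induction_on with
  | empty => simp
  | insert i t hi ih =>
    rw [prod_insert hi, prod_insert hi, sum_insert hi, ih, MvPolynomial.monomial_mul]

section Permanent

variable {ι κ : Type*} [Fintype ι] [Fintype κ]

/-- The product of the column forms `∑ j, M j i * X j` of a matrix, whose coefficient at the
product of all variables is the permanent of `M`. -/
noncomputable def columnFormProd {R : Type*} [CommSemiring R] (M : Matrix ι ι R) :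
    MvPolynomial ι R :=
  ∏ i, ∑ j, MvPolynomial.monomial (Finsupp.single j 1) (M j i)

theorem sum_single_eq_ones_iff {f : ι → ι} :
    ∑ i, Finsupp.single (f i) 1 = Finsupp.equivFunOnFinite.symm 1 ↔ Function.Bijective f := by
  classical
  refine ⟨fun h => Finite.surjective_iff_bijective.1 fun j => ?_, fun h => ?_⟩
  · by_contra! hj
    have hj1 := DFunLike.congr_fun h j
    rw [Finsupp.finsetSum_apply, sum_eq_zero fun i _ => by simp [hj i]] at hj1
    simp at hj1
  · rw [h.sum_comp fun j => Finsupp.single j 1]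
    ext j
    simp [Finsupp.finsetSum_apply, Finsupp.single_apply]

theorem coeff_ones_columnFormProd [DecidableEq ι] {R : Type*} [CommSemiring R]
    (M : Matrix ι ι R) :
    (columnFormProd M).coeff (Finsupp.equivFunOnFinite.symm 1) = M.permanent := by
  rw [columnFormProd, prod_univ_sum, MvPolynomial.coeff_sum, Fintype.piFinset_univ]
  simp only [prod_monomial, MvPolynomial.coeff_monomial, sum_single_eq_ones_iff]
  rw [← sum_filter, Matrix.permanent]
  symm
  refine sum_bij (fun σ _ => (σ : ι → ι)) (fun σ _ => by simp)
    (fun σ _ τ _ h => DFunLike.coe_injective h) (fun f hf => ?_) fun σ _ => rfl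
  exact ⟨Equiv.ofBijective f (by simpa using hf), by simp, rfl⟩

theorem isHomogeneous_columnFormProd {R : Type*} [CommSemiring R] (M : Matrix ι ι R) :
    (columnFormProd M).IsHomogeneous (Fintype.card ι) := by
  have h := MvPolynomial.IsHomogeneous.prod univ
    (fun i => ∑ j, MvPolynomial.monomial (Finsupp.single j 1) (M j i)) (fun _ => 1)
    fun i _ => MvPolynomial.IsHomogeneous.sum _ _ _ fun j _ =>
      MvPolynomial.isHomogeneous_monomial _ (by simp)
  simpa [columnFormProd] using h

theorem coeff_columnFormProd_nonneg {M : Matrix ι ι ℝ} (hM : ∀ i j, 0 ≤ M i j) (m : ι →₀ ℕ) :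
    0 ≤ (columnFormProd M).coeff m := by
  classical
  rw [columnFormProd, prod_univ_sum, MvPolynomial.coeff_sum]
  refine sum_nonneg fun f _ => ?_
  rw [prod_monomial, MvPolynomial.coeff_monomial]
  split_ifs
  · exact prod_nonneg fun i _ => hM _ _
  · exact le_rfl

theorem strictlyStable_columnFormProd {M : Matrix ι ι ℝ} (hM : ∀ i j, 0 < M i j) :
    StrictlyStable (columnFormProd M) := by
  rintro z hz ⟨k, hk⟩
  rw [columnFormProd, map_prod, prod_ne_zero_iff]
  intro i _ hi
  have him : 0 < ∑ j, M j i * (z j).im :=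
    sum_pos' (fun j _ => mul_nonneg (hM j i).le (hz j)) ⟨k, mem_univ _, mul_pos (hM k i) hk⟩
  refine him.ne' ?_
  simpa [map_sum, MvPolynomial.aeval_monomial, Complex.im_sum] using congrArg Complex.im hi

theorem prod_le_eval_columnFormProd [DecidableEq ι] {M : Matrix ι ι ℝ}
    (hM : M ∈ doublyStochastic ℝ ι) {x : ι → ℝ} (hx : ∀ i, 0 < x i) :
    ∏ i, x i ≤ MvPolynomial.eval x (columnFormProd M) := by
  obtain ⟨hnn, hrow, hcol⟩ := mem_doublyStochastic_iff_sum.1 hM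
  have hprod : ∏ j, x j = ∏ i, ∏ j, x j ^ M j i := by
    rw [Finset.prod_comm]
    refine prod_congr rfl fun j _ => ?_
    rw [← rpow_sum_of_pos (hx j), hrow, rpow_one]
  have heval : MvPolynomial.eval x (columnFormProd M) = ∏ i, ∑ j, M j i * x j := by
    simp [columnFormProd, map_prod, MvPolynomial.eval_monomial]
  rw [hprod, heval]
  exact prod_le_prod (fun i _ => prod_nonneg fun j _ => rpow_nonneg (hx j).le _) fun i _ =>
    geom_mean_le_arith_mean_weighted _ _ _ (fun j _ => hnn j i) (hcol i) fun j _ => (hx j).le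

theorem exp_neg_le_permanent_of_pos {n : ℕ} {M : Matrix (Fin n) (Fin n) ℝ}
    (hM : M ∈ doublyStochastic ℝ (Fin n)) (hpos : ∀ i j, 0 < M i j) :
    exp (-(n : ℝ)) ≤ M.permanent := by
  rw [← coeff_ones_columnFormProd, ← one_mul (exp _)]
  refine (strictlyStable_columnFormProd hpos).mul_exp_neg_le_coeff_one ?_
    (coeff_columnFormProd_nonneg fun i j => (hpos i j).le) fun x hx => ?_
  · simpa using isHomogeneous_columnFormProd M
  · simpa using prod_le_eval_columnFormProd hM hx

theorem permanent_submatrix_equiv_self {R : Type*} [CommSemiring R] [DecidableEq ι]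
    [DecidableEq κ] (e : κ ≃ ι) (M : Matrix ι ι R) :
    (M.submatrix e e).permanent = M.permanent :=
  Fintype.sum_equiv e.permCongr _ _ fun σ => Fintype.prod_equiv e _ _ fun i => by simp

/-- A weak form of van der Waerden's bound `n! / n ^ n`. -/
theorem exp_neg_card_le_permanent [DecidableEq ι] {M : Matrix ι ι ℝ}
    (hM : M ∈ doublyStochastic ℝ ι) : exp (-(Fintype.card ι : ℝ)) ≤ M.permanent := by
  set n := Fintype.card ι
  set A := M.submatrix (Fintype.equivFin ι).symm (Fintype.equivFin ι).symm with hA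
  have hAds : A ∈ doublyStochastic ℝ (Fin n) :=
    reindex_mem_doublyStochastic (e₁ := Fintype.equivFin ι) (e₂ := Fintype.equivFin ι) hM
  rw [← permanent_submatrix_equiv_self (Fintype.equivFin ι).symm, ← hA]
  rcases Nat.eq_zero_or_pos n with hn | hn
  · have : IsEmpty (Fin n) := by rw [hn]; infer_instance
    rw [Matrix.permanent_isEmpty, hn]
    simp
  have hn' : (0 : ℝ) < n := Nat.cast_pos.2 hn
  set J : Matrix (Fin n) (Fin n) ℝ := fun _ _ => (n : ℝ)⁻¹
  have hJ : J ∈ doublyStochastic ℝ (Fin n) :=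
    mem_doublyStochastic_iff_sum.2 ⟨fun _ _ => by positivity, by simp [J, hn'.ne'],
      by simp [J, hn'.ne']⟩
  have hlim : Tendsto (fun s : ℝ => ((1 - s) • A + s • J).permanent) (𝓝[>] 0) (𝓝 A.permanent) := by
    have hcont : Continuous fun s : ℝ => ((1 - s) • A + s • J).permanent := by
      simp only [Matrix.permanent, Matrix.add_apply, Matrix.smul_apply, smul_eq_mul]
      fun_prop
    simpa using (hcont.tendsto 0).mono_left (nhdsWithin_le_nhds (s := Set.Ioi 0))
  refine ge_of_tendsto hlim ?_
  filter_upwards [Ioo_mem_nhdsGT (zero_lt_one' ℝ)] with s ⟨hs0, hs1⟩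
  refine exp_neg_le_permanent_of_pos
    (convex_doublyStochastic hAds hJ (by linarith) hs0.le (by ring)) fun i j => ?_
  have hAij : 0 ≤ (1 - s) * A i j :=
    mul_nonneg (by linarith) (nonneg_of_mem_doublyStochastic hAds)
  have hJij : 0 < s * J i j := mul_pos hs0 (by positivity)
  exact add_pos_of_nonneg_of_pos hAij hJij

/-! ### Permanents of nearly doubly stochastic matrices -/

-- The mass is moved between the columns `j` and `j'` along their common neighbours; the resulting
-- flow is antisymmetric in `j` and `j'`, so the row sums vanish.
theorem exists_sum_row_eq_zero_sum_col_eq {s : ι → κ → ℝ} (hs : ∀ i j, s i j ∈ Set.Icc 0 1)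
    {c : ℝ} (hc : 0 < c) (hcs : ∀ j j', c ≤ ∑ i, s i j * s i j')
    {f : κ → ℝ} (hf : ∑ j, f j = 0) {m : ℝ} (hm : ∀ j, |f j| ≤ m) :
    ∃ F : ι → κ → ℝ, (∀ i, ∑ j, F i j = 0) ∧ (∀ j, ∑ i, F i j = f j) ∧
      ∀ i j, |F i j| ≤ s i j * (2 * m / c) := by
  set n : ℝ := (Fintype.card κ : ℝ)
  set N : κ → κ → ℝ := fun j j' => ∑ i, s i j * s i j'
  set G : ι → κ → κ → ℝ := fun i j j' => (f j - f j') / n * (s i j * s i j' / N j j')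
  have hN : ∀ j j', 0 < N j j' := fun j j' => hc.trans_le (hcs j j')
  have hn : ∀ _ : κ, 0 < n := fun j => Nat.cast_pos.2 (Fintype.card_pos_iff.2 ⟨j⟩)
  have hanti : ∀ i j j', G i j' j = -G i j j' := fun i j j' => by
    have hNsymm : N j' j = N j j' := sum_congr rfl fun i _ => mul_comm _ _
    simp only [G, hNsymm]
    ring
  refine ⟨fun i j => ∑ j', G i j j', fun i => ?_, fun j => ?_, fun i j => ?_⟩
  · have h : ∑ j, ∑ j', G i j j' = -∑ j, ∑ j', G i j j' := by
      conv_lhs => rw [sum_comm]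
      simp only [← sum_neg_distrib]
      exact sum_congr rfl fun j _ => sum_congr rfl fun j' _ => hanti i j j'
    linarith
  · have hG : ∀ j', ∑ i, G i j j' = (f j - f j') / n := fun j' => by
      rw [← mul_sum, ← sum_div, div_self (hN j j').ne', mul_one]
    rw [sum_comm, sum_congr rfl fun j' _ => hG j', ← sum_div, sum_sub_distrib, hf,
      sum_const, card_univ, nsmul_eq_mul, sub_zero, mul_div_cancel_left₀ _ (hn j).ne']
  · have hm0 : 0 ≤ m := (abs_nonneg _).trans (hm j)
    have hG : ∀ j', |G i j j'| ≤ 2 * m / n * (s i j / c) := fun j' => by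
      have hf' : |f j - f j'| ≤ 2 * m := (abs_sub _ _).trans (by linarith [hm j, hm j'])
      have hss : s i j * s i j' ≤ s i j := mul_le_of_le_one_right (hs i j).1 (hs i j').2
      have hss0 : 0 ≤ s i j * s i j' := mul_nonneg (hs i j).1 (hs i j').1
      rw [abs_mul, abs_div, abs_div, abs_of_pos (hn j), abs_of_pos (hN j j'), abs_of_nonneg hss0]
      exact mul_le_mul (div_le_div_of_nonneg_right hf' (hn j).le)
        (div_le_div₀ (hs i j).1 hss hc (hcs j j')) (div_nonneg hss0 (hN j j').le)
        (div_nonneg (by positivity) (hn j).le)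
    calc |∑ j', G i j j'| ≤ ∑ j', |G i j j'| := abs_sum_le_sum_abs _ _
      _ ≤ ∑ _j' : κ, 2 * m / n * (s i j / c) := sum_le_sum fun j' _ => hG j'
      _ = s i j * (2 * m / c) := by
        have := hn j
        rw [sum_const, card_univ, nsmul_eq_mul]
        change n * (2 * m / n * (s i j / c)) = _
        field_simp

theorem exists_mem_doublyStochastic_le_of_sum_row_eq_one [DecidableEq ι] {A s : Matrix ι ι ℝ}
    {β c m : ℝ} (hβ : 0 < β) (hc : 0 < c) (hm : 2 * m ≤ β * c) (hA : ∀ i j, β * s i j ≤ A i j)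
    (hrow : ∀ i, ∑ j, A i j = 1) (hcol : ∀ j, |∑ i, A i j - 1| ≤ m)
    (hs : ∀ i j, s i j ∈ Set.Icc 0 1) (hcs : ∀ j j', c ≤ ∑ i, s i j * s i j') :
    ∃ B ∈ doublyStochastic ℝ ι, ∀ i j, B i j ≤ (1 + 2 * m / (β * c)) * A i j := by
  have hsum : ∑ j, (1 - ∑ i, A i j) = 0 := by
    rw [sum_sub_distrib, sum_comm]
    simp [hrow]
  obtain ⟨F, hFrow, hFcol, hF⟩ := exists_sum_row_eq_zero_sum_col_eq hs hc hcs hsum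
    (m := m) fun j => by rw [abs_sub_comm]; exact hcol j
  have hA0 : ∀ i j, 0 ≤ A i j := fun i j => (mul_nonneg hβ.le (hs i j).1).trans (hA i j)
  have hFA : ∀ i j, |F i j| ≤ 2 * m / (β * c) * A i j := fun i j => by
    have hm0 : 0 ≤ m := (abs_nonneg _).trans (hcol j)
    calc |F i j| ≤ s i j * (2 * m / c) := hF i j
      _ = 2 * m / (β * c) * (β * s i j) := by field_simp
      _ ≤ 2 * m / (β * c) * A i j := by gcongr; exact hA i j
  refine ⟨fun i j => A i j + F i j, mem_doublyStochastic_iff_sum.2 ⟨fun i j => ?_, fun i => ?_,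
    fun j => ?_⟩, fun i j => ?_⟩
  · have hle : 2 * m / (β * c) * A i j ≤ A i j :=
      mul_le_of_le_one_left (hA0 i j) ((div_le_one (by positivity)).2 hm)
    linarith [neg_abs_le (F i j), hFA i j]
  · rw [sum_add_distrib, hrow, hFrow, add_zero]
  · rw [sum_add_distrib, hFcol, add_sub_cancel]
  · linarith [le_abs_self (F i j), hFA i j]

theorem abs_sum_div_sum_row_sub_one_le {B : ι → κ → ℝ} (hB : ∀ i j, 0 ≤ B i j) {δ : ℝ}
    (hδ : δ ≤ 1 / 2) (hrow : ∀ i, |∑ j, B i j - 1| ≤ δ) {j : κ}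
    (hcol : |∑ i, B i j - 1| ≤ δ) : |∑ i, B i j / ∑ j', B i j' - 1| ≤ 4 * δ := by
  have hlow : ∀ i, 1 - δ ≤ ∑ j, B i j := fun i => by linarith [(abs_le.1 (hrow i)).1]
  have hupp : ∀ i, ∑ j, B i j ≤ 1 + δ := fun i => by linarith [(abs_le.1 (hrow i)).2]
  have hδ0 : 0 ≤ δ := (abs_nonneg _).trans hcol
  have hcol := abs_le.1 hcol
  have hle : ∑ i, B i j / ∑ j', B i j' ≤ 1 + 4 * δ := by
    calc ∑ i, B i j / ∑ j', B i j' ≤ ∑ i, B i j / (1 - δ) :=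
          sum_le_sum fun i _ => div_le_div_of_nonneg_left (hB i j) (by linarith) (hlow i)
      _ = (∑ i, B i j) / (1 - δ) := (sum_div ..).symm
      _ ≤ 1 + 4 * δ := by rw [div_le_iff₀ (by linarith)]; nlinarith
  have hge : 1 - 4 * δ ≤ ∑ i, B i j / ∑ j', B i j' := by
    calc 1 - 4 * δ ≤ (∑ i, B i j) / (1 + δ) := by rw [le_div_iff₀ (by linarith)]; nlinarith
      _ = ∑ i, B i j / (1 + δ) := sum_div ..
      _ ≤ ∑ i, B i j / ∑ j', B i j' := sum_le_sum fun i _ =>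
          div_le_div_of_nonneg_left (hB i j) (by linarith [hlow i]) (hupp i)
  exact abs_le.2 ⟨by linarith, by linarith⟩

theorem exists_mem_doublyStochastic_le [DecidableEq ι] {B s : Matrix ι ι ℝ} {δ β c : ℝ}
    (hδ : δ ≤ 1 / 2) (hβ : 0 < β) (hc : 0 < c) (hδc : 12 * δ ≤ β * c)
    (hB : ∀ i j, β * s i j ≤ B i j) (hrow : ∀ i, |∑ j, B i j - 1| ≤ δ)
    (hcol : ∀ j, |∑ i, B i j - 1| ≤ δ) (hs : ∀ i j, s i j ∈ Set.Icc 0 1)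
    (hcs : ∀ j j', c ≤ ∑ i, s i j * s i j') :
    ∃ A ∈ doublyStochastic ℝ ι, ∀ i j,
      A i j ≤ (1 + 12 * δ / (β * c)) * (B i j / (1 - δ)) := by
  have hB0 : ∀ i j, 0 ≤ B i j := fun i j => (mul_nonneg hβ.le (hs i j).1).trans (hB i j)
  have hlow : ∀ i, 1 - δ ≤ ∑ j, B i j := fun i => by linarith [(abs_le.1 (hrow i)).1]
  have hupp : ∀ i, ∑ j, B i j ≤ 3 / 2 := fun i => by linarith [(abs_le.1 (hrow i)).2]
  have hpos : ∀ i, 0 < ∑ j, B i j := fun i => by linarith [hlow i]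
  have hBr : ∀ i j, β / (3 / 2) * s i j ≤ B i j / ∑ j', B i j' := fun i j => by
    rw [div_mul_eq_mul_div]
    exact div_le_div₀ (hB0 i j) (hB i j) (hpos i) (hupp i)
  have hconst : 2 * (4 * δ) / (β / (3 / 2) * c) = 12 * δ / (β * c) := by field_simp; ring
  obtain ⟨A, hA, hAB⟩ := exists_mem_doublyStochastic_le_of_sum_row_eq_one
    (A := fun i j => B i j / ∑ j', B i j') (β := β / (3 / 2)) (m := 4 * δ) (by positivity) hc
    (by linarith) hBr (fun i => by rw [← sum_div, div_self (hpos i).ne'])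
    (fun j => abs_sum_div_sum_row_sub_one_le hB0 hδ hrow (hcol j)) hs hcs
  refine ⟨A, hA, fun i j => (hAB i j).trans ?_⟩
  have hδ0 : 0 ≤ δ := (abs_nonneg _).trans (hrow i)
  rw [hconst]
  gcongr
  · exact hB0 i j
  · linarith
  · exact hlow i

theorem permanent_le_permanent [DecidableEq ι] {A B : Matrix ι ι ℝ} (hA : ∀ i j, 0 ≤ A i j)
    (hAB : ∀ i j, A i j ≤ B i j) : A.permanent ≤ B.permanent :=
  sum_le_sum fun _ _ => prod_le_prod (fun _ _ => hA _ _) fun _ _ => hAB _ _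

theorem exp_neg_le_permanent_of_approx [DecidableEq ι] {B s : Matrix ι ι ℝ} {δ β c : ℝ}
    (hδ0 : 0 ≤ δ) (hδ : δ ≤ 1 / 2) (hβ : 0 < β) (hc : 0 < c) (hδc : 12 * δ ≤ β * c)
    (hB : ∀ i j, β * s i j ≤ B i j) (hrow : ∀ i, |∑ j, B i j - 1| ≤ δ)
    (hcol : ∀ j, |∑ i, B i j - 1| ≤ δ) (hs : ∀ i j, s i j ∈ Set.Icc 0 1)
    (hcs : ∀ j j', c ≤ ∑ i, s i j * s i j') :
    exp (-(Fintype.card ι * (1 + 2 * δ + 12 * δ / (β * c)))) ≤ B.permanent := by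
  obtain ⟨A, hA, hAB⟩ := exists_mem_doublyStochastic_le hδ hβ hc hδc hB hrow hcol hs hcs
  set η := 12 * δ / (β * c)
  have hB0 : ∀ i j, 0 ≤ B i j := fun i j => (mul_nonneg hβ.le (hs i j).1).trans (hB i j)
  have hexp : (1 + η) / (1 - δ) ≤ exp (2 * δ + η) := by
    rw [div_le_iff₀ (by linarith), exp_add]
    have h2δ := add_one_le_exp (2 * δ)
    have hη := add_one_le_exp η
    have h1 : 1 ≤ exp (2 * δ) * (1 - δ) := by nlinarith
    nlinarith [exp_pos η]
  have hAB' : ∀ i j, A i j ≤ (exp (2 * δ + η) • B) i j := fun i j => by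
    calc A i j ≤ (1 + η) * (B i j / (1 - δ)) := hAB i j
      _ = (1 + η) / (1 - δ) * B i j := by ring
      _ ≤ exp (2 * δ + η) * B i j := mul_le_mul_of_nonneg_right hexp (hB0 i j)
  have hper := (exp_neg_card_le_permanent hA).trans
    (permanent_le_permanent (fun _ _ => nonneg_of_mem_doublyStochastic hA) hAB')
  rw [Matrix.permanent_smul, ← exp_nat_mul] at hper
  calc exp (-(Fintype.card ι * (1 + 2 * δ + η)))
      = exp (-(Fintype.card ι * (2 * δ + η))) * exp (-Fintype.card ι) := by
        rw [← exp_add]; ring_nf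
    _ ≤ exp (-(Fintype.card ι * (2 * δ + η))) *
        (exp (Fintype.card ι * (2 * δ + η)) * B.permanent) := by gcongr
    _ = B.permanent := by rw [← mul_assoc, ← exp_add]; simp

end Permanent

/-! ### Equidistribution in residue classes and the sieve -/

/-- The multiples of an odd `d` occur in the finite family `v` with their expected frequency
`1 / d`, up to a rounding error; the second term of the minimum says that there are none of them
once `d` exceeds twice the size of the family. -/
def EquidistributedModOdd {ι : Type*} [Fintype ι] (v : ι → ℕ) : Prop :=
  ∀ d : ℕ, Odd d →
    |(#{i | d ∣ v i} : ℝ) - Fintype.card ι / d| ≤ min (1 : ℝ) (2 * Fintype.card ι / d)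

theorem abs_sub_div_le_min {m n d : ℕ} (hd : 0 < d) (hm : |(m : ℝ) - n / d| ≤ 1)
    (hm0 : 2 * n < d → m = 0) :
    |(m : ℝ) - n / d| ≤ min (1 : ℝ) (2 * n / d) := by
  refine le_min hm ?_
  rcases lt_or_ge (2 * n) d with h | h
  · rw [hm0 h, Nat.cast_zero, zero_sub, abs_neg, abs_of_nonneg (by positivity)]
    gcongr
    linarith [n.cast_nonneg (α := ℝ)]
  · exact hm.trans ((one_le_div (Nat.cast_pos.2 hd)).2 (by exact_mod_cast h))

theorem card_filter_fin_eq_count (n : ℕ) (p : ℕ → Prop) [DecidablePred p] :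
    #{i : Fin n | p i} = n.count p := by
  rw [card_filter, Fin.sum_univ_eq_sum_range (fun i => if p i then 1 else 0), ← card_filter,
    Nat.count_eq_card_filter_range]

theorem equidistributedModOdd_succ (n : ℕ) :
    EquidistributedModOdd fun i : Fin n => (i : ℕ) + 1 := by
  intro d hd
  rw [card_filter_fin_eq_count n (d ∣ · + 1), Fintype.card_fin, Nat.count_eq_card_filter_range,
    Nat.card_multiples]
  refine abs_sub_div_le_min hd.pos ?_ fun h => Nat.div_eq_of_lt (by omega)
  rw [← Nat.floor_div_eq_div (K := ℝ), abs_le]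
  have hle := Nat.floor_le (a := (n / d : ℝ)) (by positivity)
  have hlt := Nat.lt_floor_add_one (n / d : ℝ)
  constructor <;> linarith

theorem two_mul_add_one_dvd_iff_modEq {a e : ℕ} :
    2 * e + 1 ∣ 2 * a + 1 ↔ a ≡ e [MOD 2 * e + 1] := by
  have hcop : (2 * e + 1).gcd 2 = 1 := by simp
  rw [← Nat.modEq_zero_iff_dvd]
  refine ⟨fun h => Nat.ModEq.cancel_left_of_coprime hcop (Nat.ModEq.add_right_cancel' 1 ?_),
    fun h => ?_⟩
  · exact h.trans (Nat.modEq_zero_iff_dvd.2 dvd_rfl).symm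
  · exact ((h.mul_left 2).add_right 1).trans (Nat.modEq_zero_iff_dvd.2 dvd_rfl)

theorem abs_count_modEq_sub_div_le (n v : ℕ) {d : ℕ} (hd : 0 < d) :
    |(n.count (· ≡ v [MOD d]) : ℝ) - n / d| ≤ 1 := by
  have hd' : (0 : ℝ) < d := Nat.cast_pos.2 hd
  have hdiv : (n : ℝ) / d = (n / d : ℕ) + (n % d : ℕ) / d := by
    field_simp
    exact_mod_cast (Nat.div_add_mod n d).symm
  have hmod : ((n % d : ℕ) : ℝ) / d ≤ 1 :=
    (div_le_one hd').2 (by exact_mod_cast (Nat.mod_lt n hd).le)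
  have hmod0 : 0 ≤ ((n % d : ℕ) : ℝ) / d := by positivity
  rw [Nat.count_modEq_card _ hd, hdiv, abs_le]
  push_cast
  split_ifs <;> constructor <;> linarith

theorem equidistributedModOdd_odd (n : ℕ) :
    EquidistributedModOdd fun i : Fin n => 2 * (i : ℕ) + 1 := by
  rintro _ ⟨e, rfl⟩
  rw [card_filter_fin_eq_count n (2 * e + 1 ∣ 2 * · + 1), Fintype.card_fin]
  simp only [two_mul_add_one_dvd_iff_modEq]
  refine abs_sub_div_le_min (by omega) (abs_count_modEq_sub_div_le n e (by omega)) fun h => ?_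
  simp only [Nat.count_eq_card_filter_range, card_eq_zero, filter_eq_empty_iff, mem_range,
    ← two_mul_add_one_dvd_iff_modEq]
  intro a ha hdvd
  have := Nat.le_of_dvd (by omega) hdvd
  omega

theorem prod_ite_dvd_eq_sum_powerset {P : Finset ℕ} (hP : ∀ p ∈ P, p.Prime) (c : ℕ → ℝ) (m : ℕ) :
    ∏ p ∈ P, (if p ∣ m then 1 + c p else 1) =
      ∑ S ∈ P.powerset, (∏ p ∈ S, c p) * (if (∏ p ∈ S, p) ∣ m then 1 else 0) := by
  have hite : ∀ p, (if p ∣ m then 1 + c p else 1) = 1 + c p * (if p ∣ m then 1 else 0) :=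
    fun p => by split_ifs <;> simp
  simp only [hite, prod_one_add]
  refine sum_congr rfl fun S hS => ?_
  have hdvd : (∏ p ∈ S, p) ∣ m ↔ ∀ p ∈ S, p ∣ m :=
    ⟨fun h p hp => (dvd_prod_of_mem _ hp).trans h,
      prod_primes_dvd m fun p hp => (hP p (mem_powerset.1 hS hp)).prime⟩
  rw [prod_mul_distrib, prod_boole]
  simp only [hdvd]

theorem EquidistributedModOdd.abs_card_sub_le_rpow {ι : Type*} [Fintype ι] {v : ι → ℕ}
    (hv : EquidistributedModOdd v) {θ : ℝ} (hθ : θ ∈ Set.Icc 0 1) {d : ℕ} (hd : Odd d) :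
    |(#{i | d ∣ v i} : ℝ) - Fintype.card ι / d| ≤ (2 * Fintype.card ι / d) ^ θ := by
  set x : ℝ := 2 * Fintype.card ι / d
  have hx : 0 ≤ x := by positivity
  have hrpow : (min 1 x) ≤ x ^ θ := by
    rcases le_total 1 x with h | h
    · exact (min_le_left _ _).trans (one_le_rpow h hθ.1)
    · exact (min_le_right _ _).trans (self_le_rpow_of_le_one hx h hθ.2)
  exact (hv d hd).trans hrpow

theorem EquidistributedModOdd.abs_sum_prod_sub_le {ι : Type*} [Fintype ι] {v : ι → ℕ}
    (hv : EquidistributedModOdd v) {θ : ℝ} (hθ : θ ∈ Set.Icc 0 1) {P : Finset ℕ}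
    (hP : ∀ p ∈ P, p.Prime ∧ 2 < p) (c : ℕ → ℝ) :
    |∑ i, ∏ p ∈ P, (if p ∣ v i then 1 + c p else 1) - Fintype.card ι * ∏ p ∈ P, (1 + c p / p)| ≤
      (2 * Fintype.card ι : ℝ) ^ θ * ∏ p ∈ P, (1 + |c p| / (p : ℝ) ^ θ) := by
  set n : ℝ := (Fintype.card ι : ℝ)
  have hsum : ∑ i, ∏ p ∈ P, (if p ∣ v i then 1 + c p else 1) =
      ∑ S ∈ P.powerset, (∏ p ∈ S, c p) * (#{i | (∏ p ∈ S, p) ∣ v i} : ℝ) := by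
    simp only [prod_ite_dvd_eq_sum_powerset (fun p hp => (hP p hp).1)]
    rw [sum_comm]
    simp only [← mul_sum, sum_boole]
  have hmain : n * ∏ p ∈ P, (1 + c p / p) =
      ∑ S ∈ P.powerset, (∏ p ∈ S, c p) * (n / (∏ p ∈ S, p : ℕ)) := by
    rw [prod_one_add, mul_sum]
    refine sum_congr rfl fun S _ => ?_
    rw [prod_div_distrib, Nat.cast_prod]
    ring
  rw [hsum, hmain, ← sum_sub_distrib, prod_one_add, mul_sum]
  refine (abs_sum_le_sum_abs _ _).trans (sum_le_sum fun S hS => ?_)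
  have hodd : Odd (∏ p ∈ S, p) := prod_induction _ Odd (fun _ _ => Odd.mul) odd_one fun p hp =>
    (hP p (mem_powerset.1 hS hp)).1.odd_of_ne_two (hP p (mem_powerset.1 hS hp)).2.ne'
  rw [← mul_sub, abs_mul, abs_prod]
  calc (∏ p ∈ S, |c p|) * |(#{i | (∏ p ∈ S, p) ∣ v i} : ℝ) - n / (∏ p ∈ S, p : ℕ)|
      ≤ (∏ p ∈ S, |c p|) * (2 * n / (∏ p ∈ S, p : ℕ)) ^ θ :=
        mul_le_mul_of_nonneg_left (hv.abs_card_sub_le_rpow hθ hodd)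
          (prod_nonneg fun _ _ => abs_nonneg _)
    _ = (2 * n) ^ θ * ∏ p ∈ S, |c p| / (p : ℝ) ^ θ := by
      rw [div_rpow (by positivity) (by positivity), Nat.cast_prod,
        ← finsetProd_rpow _ _ (fun _ _ => by positivity), prod_div_distrib]
      ring

/-! ### Weights that make the coprimality matrix almost stochastic -/

/-- The weight `∏ (p - 1) / (p - 2)` of `m`, over the `p ∈ P` dividing `m`. It compensates for the
density `∏ (1 - 1 / p)` of the integers coprime to `m`. -/
noncomputable def primeWeight (P : Finset ℕ) (m : ℕ) : ℝ :=
  ∏ p ∈ P, if p ∣ m then 1 + 1 / ((p : ℝ) - 2) else 1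

/-- The Euler product `∏ (1 + p⁻ˢ / (p - 2))` of `primeWeight P`; its value at `s = 1` is the mean
of `primeWeight P`. -/
noncomputable def weightEulerProd (P : Finset ℕ) (s : ℝ) : ℝ :=
  ∏ p ∈ P, (1 + 1 / ((p : ℝ) - 2) / (p : ℝ) ^ s)

/-- The indicator that no element of `P` divides both `u` and `m`, in multiplicative form. -/
noncomputable def coprimeInd (P : Finset ℕ) (u m : ℕ) : ℝ :=
  ∏ p ∈ P, if p ∣ u ∧ p ∣ m then 0 else 1

theorem exists_two_pow_card_primeFactors_le {ε : ℝ} (hε : 0 < ε) :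
    ∃ C : ℝ, 1 ≤ C ∧ ∀ m : ℕ, m ≠ 0 → (2 : ℝ) ^ #m.primeFactors ≤ C * (m : ℝ) ^ ε := by
  have hlim := (tendsto_rpow_atTop hε).comp (tendsto_natCast_atTop_atTop (R := ℝ))
  obtain ⟨T, hT⟩ := eventually_atTop.1 (hlim.eventually_ge_atTop 2)
  refine ⟨2 ^ T, one_le_pow₀ one_le_two, fun m hm => ?_⟩
  have hsmall : ∏ p ∈ m.primeFactors, (if p < T then (2 : ℝ) else 1) ≤ 2 ^ T := by
    rw [← prod_filter, prod_const]
    refine pow_le_pow_right₀ one_le_two ?_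
    calc #{p ∈ m.primeFactors | p < T} ≤ #(range T) :=
          card_le_card fun p hp => mem_range.2 (mem_filter.1 hp).2
      _ = T := card_range T
  have hrad : ∏ p ∈ m.primeFactors, (p : ℝ) ^ ε ≤ (m : ℝ) ^ ε := by
    rw [finsetProd_rpow _ _ (fun _ _ => by positivity), ← Nat.cast_prod]
    gcongr
    exact Nat.le_of_dvd (Nat.pos_of_ne_zero hm) (Nat.prod_primeFactors_dvd m)
  calc (2 : ℝ) ^ #m.primeFactors = ∏ _p ∈ m.primeFactors, (2 : ℝ) := (prod_const _).symm
    _ ≤ ∏ p ∈ m.primeFactors, (if p < T then (2 : ℝ) else 1) * (p : ℝ) ^ ε := by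
      refine prod_le_prod (fun _ _ => zero_le_two) fun p hp => ?_
      have hp1 : (1 : ℝ) ≤ (p : ℝ) ^ ε :=
        one_le_rpow (by exact_mod_cast (Nat.prime_of_mem_primeFactors hp).one_le) hε.le
      split_ifs with hpT
      · linarith
      · exact (hT p (not_lt.1 hpT)).trans_eq (one_mul _).symm
    _ ≤ 2 ^ T * (m : ℝ) ^ ε := by
      rw [prod_mul_distrib]
      exact mul_le_mul hsmall hrad (prod_nonneg fun _ _ => by positivity) (by positivity)

theorem prod_ite_dvd_two_le {P : Finset ℕ} (hP : ∀ p ∈ P, p.Prime) {u : ℕ} (hu : u ≠ 0) :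
    ∏ p ∈ P, (if p ∣ u then (2 : ℝ) else 1) ≤ 2 ^ #u.primeFactors := by
  rw [← prod_filter, prod_const]
  refine pow_le_pow_right₀ one_le_two (card_le_card fun p hp => ?_)
  obtain ⟨hpP, hpu⟩ := mem_filter.1 hp
  exact Nat.mem_primeFactors.2 ⟨hP p hpP, hpu, hu⟩

theorem one_div_cast_sub_two_mem_Icc {p : ℕ} (hp : 2 < p) :
    1 / ((p : ℝ) - 2) ∈ Set.Icc (0 : ℝ) 1 := by
  have h3 : (3 : ℝ) ≤ p := by exact_mod_cast hp
  exact ⟨one_div_nonneg.2 (by linarith), (div_le_one (by linarith)).2 (by linarith)⟩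

theorem one_le_primeWeight {P : Finset ℕ} (hP : ∀ p ∈ P, 2 < p) (m : ℕ) :
    1 ≤ primeWeight P m := by
  refine one_le_prod fun p hp => ?_
  have := (one_div_cast_sub_two_mem_Icc (hP p hp)).1
  split_ifs <;> linarith

theorem primeWeight_le {P : Finset ℕ} (hP : ∀ p ∈ P, p.Prime ∧ 2 < p) {m : ℕ} (hm : m ≠ 0) :
    primeWeight P m ≤ 2 ^ #m.primeFactors := by
  refine le_trans ?_ (prod_ite_dvd_two_le (fun p hp => (hP p hp).1) hm)
  refine prod_le_prod (fun p hp => ?_) fun p hp => ?_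
  all_goals
    have := one_div_cast_sub_two_mem_Icc (hP p hp).2
    split_ifs <;> linarith [this.1, this.2]

theorem one_le_weightEulerProd {P : Finset ℕ} (hP : ∀ p ∈ P, 2 < p) (s : ℝ) :
    1 ≤ weightEulerProd P s := by
  refine one_le_prod fun p hp => ?_
  have := (one_div_cast_sub_two_mem_Icc (hP p hp)).1
  have : 0 ≤ 1 / ((p : ℝ) - 2) / (p : ℝ) ^ s := by positivity
  linarith

theorem weightEulerProd_antitone {P : Finset ℕ} (hP : ∀ p ∈ P, 2 < p) :
    Antitone (weightEulerProd P) := by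
  intro s t hst
  have hnonneg : ∀ p ∈ P, 0 ≤ 1 / ((p : ℝ) - 2) := fun p hp =>
    (one_div_cast_sub_two_mem_Icc (hP p hp)).1
  refine prod_le_prod (fun p hp => ?_) fun p hp => ?_
  · have := hnonneg p hp
    positivity
  · have hp1 : (1 : ℝ) ≤ p := by exact_mod_cast (Nat.lt_of_succ_lt (hP p hp)).le
    have := hnonneg p hp
    gcongr

theorem exists_weightEulerProd_le {s : ℝ} (hs : 0 < s) :
    ∃ D : ℝ, ∀ P : Finset ℕ, (∀ p ∈ P, 2 < p) → weightEulerProd P s ≤ D := by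
  have hsum : Summable fun p : ℕ => 3 * ((p : ℝ) ^ (1 + s))⁻¹ :=
    (summable_nat_rpow_inv.2 (by linarith)).mul_left 3
  refine ⟨exp (∑' p : ℕ, 3 * ((p : ℝ) ^ (1 + s))⁻¹), fun P hP => ?_⟩
  have hterm : ∀ p ∈ P, 1 / ((p : ℝ) - 2) / (p : ℝ) ^ s ≤ 3 * ((p : ℝ) ^ (1 + s))⁻¹ := by
    intro p hp
    have h3 : (3 : ℝ) ≤ p := by exact_mod_cast hP p hp
    have hlin : 1 / ((p : ℝ) - 2) ≤ 3 / p := by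
      rw [div_le_div_iff₀ (by linarith) (by linarith)]
      linarith
    rw [rpow_one_add' p.cast_nonneg (by linarith), mul_inv, ← mul_assoc, ← div_eq_mul_inv,
      ← div_eq_mul_inv]
    gcongr
  calc weightEulerProd P s ≤ ∏ p ∈ P, exp (3 * ((p : ℝ) ^ (1 + s))⁻¹) := by
        refine prod_le_prod (fun p hp => ?_) fun p hp => ?_
        · have := (one_div_cast_sub_two_mem_Icc (hP p hp)).1
          positivity
        · linarith [hterm p hp, add_one_le_exp (3 * ((p : ℝ) ^ (1 + s))⁻¹)]
    _ = exp (∑ p ∈ P, 3 * ((p : ℝ) ^ (1 + s))⁻¹) := (exp_sum _ _).symm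
    _ ≤ exp (∑' p : ℕ, 3 * ((p : ℝ) ^ (1 + s))⁻¹) :=
      exp_le_exp.2 (hsum.sum_le_tsum _ fun p _ => by positivity)

theorem coprimeInd_comm (P : Finset ℕ) (u m : ℕ) : coprimeInd P u m = coprimeInd P m u := by
  simp only [coprimeInd, and_comm]

theorem coprimeInd_mem_Icc (P : Finset ℕ) (u m : ℕ) : coprimeInd P u m ∈ Set.Icc (0 : ℝ) 1 :=
  ⟨prod_nonneg fun p _ => by split_ifs <;> norm_num,
    prod_le_one (fun p _ => by split_ifs <;> norm_num) fun p _ => by split_ifs <;> norm_num⟩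

theorem coprimeInd_mul {P : Finset ℕ} (hP : ∀ p ∈ P, p.Prime) (u u' m : ℕ) :
    coprimeInd P (u * u') m = coprimeInd P u m * coprimeInd P u' m := by
  rw [coprimeInd, coprimeInd, coprimeInd, ← prod_mul_distrib]
  refine prod_congr rfl fun p hp => ?_
  by_cases hm : p ∣ m <;> by_cases hu : p ∣ u <;> by_cases hu' : p ∣ u' <;>
    simp [hm, hu, hu', (hP p hp).dvd_mul]

theorem coprimeInd_eq_ite {P : Finset ℕ} (hP : ∀ p ∈ P, p.Prime) {u : ℕ} (hu : u ≠ 0)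
    (huP : u.primeFactors ⊆ P) (m : ℕ) :
    coprimeInd P u m = if Nat.gcd u m = 1 then 1 else 0 := by
  split_ifs with h
  · exact prod_eq_one fun p hp => if_neg fun hdvd =>
      (hP p hp).one_lt.ne' (Nat.dvd_one.1 (h ▸ Nat.dvd_gcd hdvd.1 hdvd.2))
  · obtain ⟨p, hp, hpu, hpm⟩ := Nat.Prime.not_coprime_iff_dvd.1 h
    exact prod_eq_zero (huP (Nat.mem_primeFactors.2 ⟨hp, hpu, hu⟩)) (if_pos ⟨hpu, hpm⟩)

section WeightedSums

variable {ι : Type*} [Fintype ι] {v : ι → ℕ} {θ : ℝ} {P : Finset ℕ} {u : ℕ}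

theorem prod_ite_dvd_mul_coprimeInd (c : ℕ → ℝ) (u m : ℕ) :
    (∏ p ∈ P, if p ∣ m then 1 + c p else 1) * coprimeInd P u m =
      ∏ p ∈ P, if p ∣ m then 1 + (if p ∣ u then -1 else c p) else 1 := by
  rw [coprimeInd, ← prod_mul_distrib]
  refine prod_congr rfl fun p _ => ?_
  by_cases hm : p ∣ m <;> by_cases hu : p ∣ u <;> simp [hm, hu]

theorem EquidistributedModOdd.abs_sum_prod_mul_coprimeInd_sub_le (hv : EquidistributedModOdd v)
    (hθ : θ ∈ Set.Icc 0 1) (hP : ∀ p ∈ P, p.Prime ∧ 2 < p) (hu : u ≠ 0) {c : ℕ → ℝ}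
    (hc : ∀ p ∈ P, 0 ≤ c p) :
    |∑ i, (∏ p ∈ P, if p ∣ v i then 1 + c p else 1) * coprimeInd P u (v i) -
        Fintype.card ι * ∏ p ∈ P, (1 + (if p ∣ u then -1 else c p) / p)| ≤
      (2 * Fintype.card ι : ℝ) ^ θ *
        (2 ^ #u.primeFactors * ∏ p ∈ P, (1 + c p / (p : ℝ) ^ θ)) := by
  simp only [prod_ite_dvd_mul_coprimeInd]
  refine (hv.abs_sum_prod_sub_le hθ hP _).trans (mul_le_mul_of_nonneg_left ?_ (by positivity))
  have hfac : ∀ p ∈ P, 0 ≤ 1 + c p / (p : ℝ) ^ θ := fun p hp => by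
    have := hc p hp
    positivity
  calc ∏ p ∈ P, (1 + |if p ∣ u then -1 else c p| / (p : ℝ) ^ θ)
      ≤ ∏ p ∈ P, (if p ∣ u then (2 : ℝ) else 1) * (1 + c p / (p : ℝ) ^ θ) := by
        refine prod_le_prod (fun p _ => by positivity) fun p hp => ?_
        have hp1 : (1 : ℝ) ≤ p := by exact_mod_cast (hP p hp).1.one_le
        have hinv : 1 / (p : ℝ) ^ θ ≤ 1 :=
          (div_le_one (by positivity)).2 (one_le_rpow hp1 hθ.1)
        have hcp : 0 ≤ c p / (p : ℝ) ^ θ := div_nonneg (hc p hp) (by positivity)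
        split_ifs
        · rw [abs_neg, abs_one]
          linarith
        · rw [abs_of_nonneg (hc p hp), one_mul]
    _ ≤ 2 ^ #u.primeFactors * ∏ p ∈ P, (1 + c p / (p : ℝ) ^ θ) := by
      rw [prod_mul_distrib]
      exact mul_le_mul_of_nonneg_right (prod_ite_dvd_two_le (fun p hp => (hP p hp).1) hu)
        (prod_nonneg hfac)

theorem prod_one_add_ite_div_eq (hP : ∀ p ∈ P, 2 < p) (u : ℕ) :
    ∏ p ∈ P, (1 + (if p ∣ u then -1 else 1 / ((p : ℝ) - 2)) / p) =
      weightEulerProd P 1 / primeWeight P u := by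
  rw [weightEulerProd, primeWeight, ← prod_div_distrib]
  refine prod_congr rfl fun p hp => ?_
  have h3 : (3 : ℝ) ≤ p := by exact_mod_cast hP p hp
  have hp0 : (p : ℝ) ≠ 0 := by linarith
  have hp1 : (p : ℝ) - 1 ≠ 0 := by linarith
  have hp2 : (p : ℝ) - 2 ≠ 0 := by linarith
  have hw : 1 + 1 / ((p : ℝ) - 2) = (p - 1) / (p - 2) := by
    field_simp
    ring
  rw [rpow_one, hw]
  split_ifs
  · field_simp
    ring
  · rw [div_one]

theorem EquidistributedModOdd.abs_sum_primeWeight_mul_coprimeInd_sub_le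
    (hv : EquidistributedModOdd v) (hθ : θ ∈ Set.Icc 0 1) (hP : ∀ p ∈ P, p.Prime ∧ 2 < p)
    (hu : u ≠ 0) :
    |∑ i, primeWeight P (v i) * coprimeInd P u (v i) -
        Fintype.card ι * (weightEulerProd P 1 / primeWeight P u)| ≤
      (2 * Fintype.card ι : ℝ) ^ θ * (2 ^ #u.primeFactors * weightEulerProd P θ) := by
  rw [← prod_one_add_ite_div_eq fun p hp => (hP p hp).2]
  exact hv.abs_sum_prod_mul_coprimeInd_sub_le hθ hP hu fun p hp =>
    (one_div_cast_sub_two_mem_Icc (hP p hp).2).1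

theorem inv_two_pow_le_prod_one_sub_inv (hP : ∀ p ∈ P, p.Prime) (hu : u ≠ 0) :
    ((2 : ℝ) ^ #u.primeFactors)⁻¹ ≤ ∏ p ∈ P, (1 + (if p ∣ u then -1 else 0) / (p : ℝ)) := by
  calc ((2 : ℝ) ^ #u.primeFactors)⁻¹ ≤ (∏ p ∈ P, (if p ∣ u then (2 : ℝ) else 1))⁻¹ :=
        inv_anti₀ (prod_pos fun p _ => by split_ifs <;> norm_num) (prod_ite_dvd_two_le hP hu)
    _ = ∏ p ∈ P, (if p ∣ u then (2 : ℝ) else 1)⁻¹ := (prod_inv_distrib _).symm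
    _ ≤ ∏ p ∈ P, (1 + (if p ∣ u then -1 else 0) / (p : ℝ)) := by
      refine prod_le_prod (fun p _ => by positivity) fun p hp => ?_
      have hp2 : (2 : ℝ) ≤ p := by exact_mod_cast (hP p hp).two_le
      have hinv : (p : ℝ)⁻¹ ≤ 2⁻¹ := by gcongr
      split_ifs
      · rw [neg_div, one_div]
        linarith
      · simp

theorem EquidistributedModOdd.le_sum_coprimeInd (hv : EquidistributedModOdd v)
    (hθ : θ ∈ Set.Icc 0 1) (hP : ∀ p ∈ P, p.Prime ∧ 2 < p) (hu : u ≠ 0) :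
    (Fintype.card ι : ℝ) / 2 ^ #u.primeFactors - (2 * Fintype.card ι) ^ θ * 2 ^ #u.primeFactors ≤
      ∑ i, coprimeInd P u (v i) := by
  have hsieve := hv.abs_sum_prod_mul_coprimeInd_sub_le hθ hP hu (c := 0) fun _ _ => le_rfl
  simp only [Pi.zero_apply, add_zero, ite_self, prod_const_one, one_mul, zero_div, mul_one]
    at hsieve
  have hmain := mul_le_mul_of_nonneg_left
    (inv_two_pow_le_prod_one_sub_inv (fun p hp => (hP p hp).1) hu)
    (Fintype.card ι).cast_nonneg
  rw [div_eq_mul_inv]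
  linarith [(abs_le.1 hsieve).1]

end WeightedSums

/-! ### The constant `coprimeConstOdd` -/

/-- The local factor at `x` of the Euler product `coprimeConstOdd`. -/
noncomputable def localFactor (x : ℝ) : ℝ :=
  (x - 1) ^ (2 * (1 - 1 / x)) / (x * (x - 2) ^ (1 - 2 / x))

/-- The limiting geometric mean of `primeWeight P` over an equidistributed family. -/
noncomputable def weightGeomMean (P : Finset ℕ) : ℝ :=
  ∏ p ∈ P, (1 + 1 / ((p : ℝ) - 2)) ^ (1 / (p : ℝ))

theorem localFactor_pos {x : ℝ} (hx : 2 < x) : 0 < localFactor x :=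
  div_pos (rpow_pos_of_pos (by linarith) _)
    (mul_pos (by linarith) (rpow_pos_of_pos (by linarith) _))

theorem localFactor_mul_rpow_sq {x : ℝ} (hx : 2 < x) :
    localFactor x * ((1 + 1 / (x - 2)) ^ (1 / x)) ^ 2 = 1 + 1 / (x - 2) / x := by
  have : 0 < x := by linarith
  have hx1 : 0 < x - 1 := by linarith
  have hx2 : 0 < x - 2 := by linarith
  have hone : 1 + 1 / (x - 2) = (x - 1) / (x - 2) := by
    field_simp
    ring
  have hnum : (x - 1) ^ (2 * (1 - 1 / x)) * (x - 1) ^ (1 / x * 2) = (x - 1) ^ (2 : ℝ) := by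
    rw [← rpow_add hx1]
    ring_nf
  have hden : (x - 2) ^ (1 - 2 / x) * (x - 2) ^ (1 / x * 2) = x - 2 := by
    rw [← rpow_add hx2]
    ring_nf
    exact rpow_one _
  rw [hone, ← rpow_two, ← rpow_mul (by positivity), localFactor, div_rpow hx1.le hx2.le,
    div_mul_div_comm, hnum, mul_assoc, hden, rpow_two]
  field_simp
  ring

theorem localFactor_le_one {x : ℝ} (hx : 2 < x) : localFactor x ≤ 1 := by
  have hx0 : 0 < x := by linarith
  have hx1 : 0 < x - 1 := by linarith
  have hx2 : 0 < x - 2 := by linarith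
  have hlog : log (localFactor x) = 2 / x * log ((x - 1) / x) +
      (1 - 2 / x) * log ((x - 1) ^ 2 / (x * (x - 2))) := by
    rw [localFactor, log_div (by positivity) (by positivity),
      log_mul (by positivity) (by positivity), log_rpow hx1, log_rpow hx2,
      log_div hx1.ne' hx0.ne', log_div (by positivity) (by positivity), log_pow,
      log_mul hx0.ne' hx2.ne']
    push_cast
    ring
  have hweight : 0 ≤ 1 - 2 / x := sub_nonneg.2 ((div_le_one hx0).2 hx.le)
  rw [← log_nonpos_iff (localFactor_pos hx).le]
  calc log (localFactor x)
      ≤ 2 / x * ((x - 1) / x - 1) + (1 - 2 / x) * ((x - 1) ^ 2 / (x * (x - 2)) - 1) := by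
        rw [hlog]
        gcongr <;> exact log_le_sub_one_of_pos (by positivity)
    _ = -(1 / x ^ 2) := by
      field_simp
      ring
    _ ≤ 0 := neg_nonpos.2 (by positivity)

theorem tprod_mem_Icc_zero_prod {ι : Type*} {f : ι → ℝ} (hf : ∀ i, f i ∈ Set.Icc 0 1)
    (s : Finset ι) : ∏' i, f i ∈ Set.Icc 0 (∏ i ∈ s, f i) := by
  have hnonneg : ∀ s : Finset ι, 0 ≤ ∏ i ∈ s, f i := fun s => prod_nonneg fun i _ => (hf i).1
  have hanti : Antitone fun s : Finset ι => ∏ i ∈ s, f i :=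
    prod_anti_set_of_le_one (fun i => (hf i).1) fun i => (hf i).2
  have hbdd : BddBelow (Set.range fun s : Finset ι => ∏ i ∈ s, f i) :=
    ⟨0, Set.forall_mem_range.2 hnonneg⟩
  have hprod : HasProd f (⨅ s : Finset ι, ∏ i ∈ s, f i) := tendsto_atTop_ciInf hanti hbdd
  rw [hprod.tprod_eq]
  exact ⟨le_ciInf hnonneg, ciInf_le hbdd s⟩

theorem coprimeConstOdd_mem_Icc {P : Finset ℕ} (hP : ∀ p ∈ P, p.Prime ∧ 2 < p) :
    coprimeConstOdd ∈ Set.Icc 0 (∏ p ∈ P, localFactor p) := by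
  have htwo : ∀ p : {p : Nat.Primes // 2 < (p : ℕ)}, (2 : ℝ) < ((p.1 : ℕ) : ℝ) := fun p => by
    exact_mod_cast p.2
  have hmem := tprod_mem_Icc_zero_prod (f := fun p : {p : Nat.Primes // 2 < (p : ℕ)} =>
      localFactor ((p.1 : ℕ) : ℝ))
    (fun p => ⟨(localFactor_pos (htwo p)).le, localFactor_le_one (htwo p)⟩)
    ((P.subtype Nat.Prime).subtype fun p : Nat.Primes => 2 < (p : ℕ))
  rw [prod_subtype_of_mem (fun p : Nat.Primes => localFactor (p : ℕ)) fun p hp =>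
    (hP p (mem_subtype.1 hp)).2] at hmem
  exact (prod_subtype_of_mem (fun p : ℕ => localFactor p) fun p hp => (hP p hp).1) ▸ hmem

theorem coprimeConstOdd_nonneg : 0 ≤ coprimeConstOdd :=
  (coprimeConstOdd_mem_Icc (P := ∅) (by simp)).1

theorem prod_localFactor_mul_weightGeomMean_sq {P : Finset ℕ} (hP : ∀ p ∈ P, 2 < p) :
    (∏ p ∈ P, localFactor p) * weightGeomMean P ^ 2 = weightEulerProd P 1 := by
  rw [weightGeomMean, ← prod_pow, ← prod_mul_distrib]
  refine prod_congr rfl fun p hp => ?_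
  rw [localFactor_mul_rpow_sq (by exact_mod_cast hP p hp), rpow_one]

theorem prod_Icc_one_add_one_div_sub_two (M : ℕ) :
    ∏ k ∈ Icc 3 (M + 2), (1 + 1 / ((k : ℝ) - 2)) = M + 1 := by
  induction M with
  | zero => simp
  | succ M ih =>
    rw [show M + 1 + 2 = (M + 2) + 1 by ring, prod_Icc_succ_top (by omega), ih]
    have : (M : ℝ) + 1 ≠ 0 := by positivity
    push_cast
    rw [show (M : ℝ) + 2 + 1 - 2 = M + 1 by ring]
    field_simp

theorem prod_one_add_one_div_sub_two_le {P : Finset ℕ} {M : ℕ} (hP : P ⊆ Icc 3 (M + 2)) :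
    ∏ p ∈ P, (1 + 1 / ((p : ℝ) - 2)) ≤ M + 1 := by
  have hnonneg : ∀ k ∈ Icc 3 (M + 2), 0 ≤ 1 / ((k : ℝ) - 2) := fun k hk =>
    (one_div_cast_sub_two_mem_Icc (mem_Icc.1 hk).1).1
  rw [← prod_Icc_one_add_one_div_sub_two]
  refine prod_le_prod_of_subset_of_one_le hP (fun k hk => ?_) fun k hk _ => ?_
  · linarith [hnonneg k (hP hk)]
  · linarith [hnonneg k hk]

theorem EquidistributedModOdd.prod_primeWeight_le {ι : Type*} [Fintype ι] {v : ι → ℕ}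
    (hv : EquidistributedModOdd v) {P : Finset ℕ} (hP : ∀ p ∈ P, p.Prime ∧ 2 < p) :
    ∏ i, primeWeight P (v i) ≤
      weightGeomMean P ^ Fintype.card ι * ∏ p ∈ P, (1 + 1 / ((p : ℝ) - 2)) := by
  have hone : ∀ p ∈ P, 1 ≤ 1 + 1 / ((p : ℝ) - 2) := fun p hp =>
    le_add_of_nonneg_right (one_div_cast_sub_two_mem_Icc (hP p hp).2).1
  have hcount : ∀ p ∈ P, (#{i | p ∣ v i} : ℝ) ≤ 1 / p * Fintype.card ι + 1 := fun p hp => by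
    have hodd := (hP p hp).1.odd_of_ne_two (hP p hp).2.ne'
    have := (abs_le.1 ((hv p hodd).trans (min_le_left _ _))).2
    rw [one_div_mul_eq_div]
    linarith
  simp only [primeWeight]
  rw [Finset.prod_comm, weightGeomMean, ← prod_pow, ← prod_mul_distrib]
  refine prod_le_prod (fun p hp => prod_nonneg fun i _ => ?_) fun p hp => ?_
  · split_ifs <;> linarith [hone p hp]
  · have hpos := zero_lt_one.trans_le (hone p hp)
    calc ∏ i, (if p ∣ v i then 1 + 1 / ((p : ℝ) - 2) else 1)
        = (1 + 1 / ((p : ℝ) - 2)) ^ (#{i | p ∣ v i} : ℝ) := by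
          rw [← prod_filter, prod_const, rpow_natCast]
      _ ≤ (1 + 1 / ((p : ℝ) - 2)) ^ (1 / (p : ℝ) * Fintype.card ι + 1) :=
        rpow_le_rpow_of_exponent_le (hone p hp) (hcount p hp)
      _ = ((1 + 1 / ((p : ℝ) - 2)) ^ (1 / (p : ℝ))) ^ Fintype.card ι * (1 + 1 / ((p : ℝ) - 2)) := by
        rw [rpow_add_one hpos.ne', rpow_mul_natCast hpos.le]

/-! ### The permanent of the weighted coprimality matrix -/

section WeightedMatrix

variable {ι : Type*} [Fintype ι] {a b v : ι → ℕ} {P : Finset ℕ} {θ C D : ℝ}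

/-- The `0`-`1` matrix of coprimality with respect to `P`; its permanent counts matchings. -/
noncomputable def coprimeMatrix (P : Finset ℕ) (a b : ι → ℕ) : Matrix ι ι ℝ :=
  Matrix.of fun i j => coprimeInd P (a i) (b j)

/-- The coprimality matrix with rows and columns scaled by `primeWeight`, normalised so that the
rows and columns of an equidistributed family sum to about `1`. -/
noncomputable def weightedCoprimeMatrix (P : Finset ℕ) (a b : ι → ℕ) : Matrix ι ι ℝ :=
  Matrix.of fun i j => primeWeight P (a i) * primeWeight P (b j) * coprimeInd P (a i) (b j) /
    (Fintype.card ι * weightEulerProd P 1)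

theorem weightedCoprimeMatrix_comm (a b : ι → ℕ) (i j : ι) :
    weightedCoprimeMatrix P a b i j = weightedCoprimeMatrix P b a j i := by
  simp only [weightedCoprimeMatrix, Matrix.of_apply, coprimeInd_comm P (a i),
    mul_comm (primeWeight P (a i))]

theorem permanent_coprimeMatrix [DecidableEq ι] [Nonempty ι] (hP : ∀ p ∈ P, 2 < p)
    (a b : ι → ℕ) :
    (coprimeMatrix P a b).permanent * ((∏ i, primeWeight P (a i)) * ∏ i, primeWeight P (b i)) =
      (Fintype.card ι * weightEulerProd P 1) ^ Fintype.card ι *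
        (weightedCoprimeMatrix P a b).permanent := by
  have hK := one_le_weightEulerProd hP 1
  have hnK : (Fintype.card ι : ℝ) * weightEulerProd P 1 ≠ 0 := by positivity
  simp only [Matrix.permanent, coprimeMatrix, weightedCoprimeMatrix, Matrix.of_apply, sum_mul,
    mul_sum]
  refine sum_congr rfl fun σ _ => ?_
  rw [prod_div_distrib, prod_const, card_univ, mul_div_cancel₀ _ (pow_ne_zero _ hnK),
    prod_mul_distrib, prod_mul_distrib, Equiv.prod_comp σ fun i => primeWeight P (a i)]
  ring

theorem EquidistributedModOdd.abs_sum_weightedCoprimeMatrix_sub_one_le [Nonempty ι]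
    (hb : EquidistributedModOdd b) (hθ : θ ∈ Set.Icc 0 1) (hP : ∀ p ∈ P, p.Prime ∧ 2 < p) {i : ι}
    (hai : a i ≠ 0) {W : ℝ} (hW : 2 ^ #(a i).primeFactors ≤ W) (hD : weightEulerProd P θ ≤ D) :
    |∑ j, weightedCoprimeMatrix P a b i j - 1| ≤
      W ^ 2 * D * (2 * Fintype.card ι) ^ θ / Fintype.card ι := by
  set n : ℝ := (Fintype.card ι : ℝ)
  set K := weightEulerProd P 1
  set w := primeWeight P (a i)
  have hn : 0 < n := Nat.cast_pos.2 Fintype.card_pos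
  have hK : 1 ≤ K := one_le_weightEulerProd (fun p hp => (hP p hp).2) 1
  have hw : 1 ≤ w := one_le_primeWeight (fun p hp => (hP p hp).2) _
  have hDθ := one_le_weightEulerProd (fun p hp => (hP p hp).2) θ
  have hW0 : 0 ≤ W := (by positivity : (0 : ℝ) ≤ 2 ^ #(a i).primeFactors).trans hW
  have hsum : ∑ j, weightedCoprimeMatrix P a b i j - 1 =
      w / (n * K) * (∑ j, primeWeight P (b j) * coprimeInd P (a i) (b j) - n * (K / w)) := by
    have hone : w / (n * K) * (n * (K / w)) = 1 := by field_simp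
    rw [mul_sub, hone, mul_sum]
    congr 1
    refine sum_congr rfl fun j _ => ?_
    rw [weightedCoprimeMatrix, Matrix.of_apply]
    ring
  rw [hsum, abs_mul, abs_of_pos (by positivity)]
  calc w / (n * K) * |∑ j, primeWeight P (b j) * coprimeInd P (a i) (b j) - n * (K / w)|
      ≤ W / n * ((2 * n) ^ θ * (W * D)) := by
        refine mul_le_mul ?_ ?_ (abs_nonneg _) (by positivity)
        · exact div_le_div₀ hW0 ((primeWeight_le hP hai).trans hW) hn
            (le_mul_of_one_le_right hn.le hK)
        · refine (hb.abs_sum_primeWeight_mul_coprimeInd_sub_le hθ hP hai).trans ?_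
          gcongr
    _ = W ^ 2 * D * (2 * n) ^ θ / n := by ring

theorem EquidistributedModOdd.le_sum_coprimeInd_mul_coprimeInd
    (hv : EquidistributedModOdd v) (hθ : θ ∈ Set.Icc 0 1) (hP : ∀ p ∈ P, p.Prime ∧ 2 < p)
    {u u' : ℕ} (hu : u * u' ≠ 0) {V : ℝ} (hV : 2 ^ #(u * u').primeFactors ≤ V)
    (hVn : 2 * V ^ 2 * (2 * Fintype.card ι) ^ θ ≤ Fintype.card ι) :
    Fintype.card ι / (2 * V) ≤ ∑ i, coprimeInd P (v i) u * coprimeInd P (v i) u' := by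
  set n : ℝ := (Fintype.card ι : ℝ)
  have hV0 : 0 < V := (by positivity : (0 : ℝ) < 2 ^ #(u * u').primeFactors).trans_le hV
  simp only [coprimeInd_comm P (v _), ← coprimeInd_mul fun p hp => (hP p hp).1]
  calc n / (2 * V) ≤ n / V - (2 * n) ^ θ * V := by
        rw [← sub_nonneg]
        have hdiff : n / V - (2 * n) ^ θ * V - n / (2 * V) =
            (n - 2 * V ^ 2 * (2 * n) ^ θ) / (2 * V) := by
          field_simp
          ring
        rw [hdiff]
        exact div_nonneg (sub_nonneg.2 hVn) (by positivity)
    _ ≤ n / 2 ^ #(u * u').primeFactors - (2 * n) ^ θ * 2 ^ #(u * u').primeFactors := by gcongr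
    _ ≤ ∑ i, coprimeInd P (u * u') (v i) := hv.le_sum_coprimeInd hθ hP hu

theorem two_pow_card_primeFactors_le_of_le (hθ : 0 ≤ θ) (hC0 : 0 ≤ C)
    (hC : ∀ m : ℕ, m ≠ 0 → (2 : ℝ) ^ #m.primeFactors ≤ C * (m : ℝ) ^ θ) {m : ℕ} {x : ℝ}
    (hm : m ≠ 0) (hmx : (m : ℝ) ≤ x) : (2 : ℝ) ^ #m.primeFactors ≤ C * x ^ θ :=
  (hC m hm).trans (by gcongr)

theorem mul_coprimeInd_le_weightedCoprimeMatrix (hP : ∀ p ∈ P, 2 < p) (hθ : θ ≤ 1)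
    (hD : weightEulerProd P θ ≤ D) (a b : ι → ℕ) (i j : ι) :
    1 / (Fintype.card ι * D) * coprimeInd P (a i) (b j) ≤ weightedCoprimeMatrix P a b i j := by
  have : Nonempty ι := ⟨i⟩
  have hK := one_le_weightEulerProd hP 1
  have hKD : weightEulerProd P 1 ≤ D := (weightEulerProd_antitone hP hθ).trans hD
  have hind := (coprimeInd_mem_Icc P (a i) (b j)).1
  have hw : 1 ≤ primeWeight P (a i) * primeWeight P (b j) :=
    one_le_mul_of_one_le_of_one_le (one_le_primeWeight hP _) (one_le_primeWeight hP _)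
  rw [weightedCoprimeMatrix, Matrix.of_apply, one_div_mul_eq_div]
  gcongr
  exact le_mul_of_one_le_left hind hw

theorem exp_neg_le_permanent_of_approx_of_params [DecidableEq ι] [Nonempty ι] {B s : Matrix ι ι ℝ}
    {T : ℝ} (hC : 1 ≤ C) (hD : 1 ≤ D) (hT : 1 ≤ T)
    (hn : 24 * (C ^ 3 * D ^ 2 * T ^ 5) ≤ Fintype.card ι)
    (hB : ∀ i j, 1 / (Fintype.card ι * D) * s i j ≤ B i j)
    (hrow : ∀ i, |∑ j, B i j - 1| ≤ C ^ 2 * D * T ^ 3 / Fintype.card ι)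
    (hcol : ∀ j, |∑ i, B i j - 1| ≤ C ^ 2 * D * T ^ 3 / Fintype.card ι)
    (hs : ∀ i j, s i j ∈ Set.Icc 0 1)
    (hcs : ∀ j j', Fintype.card ι / (2 * (C * T ^ 2)) ≤ ∑ i, s i j * s i j') :
    exp (-(Fintype.card ι + 26 * (C ^ 3 * D ^ 2 * T ^ 5))) ≤ B.permanent := by
  set n : ℝ := (Fintype.card ι : ℝ)
  have hn0 : 0 < n := Nat.cast_pos.2 Fintype.card_pos
  have hle : C ^ 2 * D * T ^ 3 ≤ C ^ 3 * D ^ 2 * T ^ 5 := by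
    have := le_self_pow₀ hD two_ne_zero
    gcongr <;> norm_num
  have hβc : 1 / (n * D) * (n / (2 * (C * T ^ 2))) = 1 / (2 * C * D * T ^ 2) := by field_simp
  refine le_trans (exp_le_exp.2 (neg_le_neg ?_)) (exp_neg_le_permanent_of_approx (by positivity) ?_
    (by positivity) (by positivity) ?_ hB hrow hcol hs hcs)
  · calc n * (1 + 2 * (C ^ 2 * D * T ^ 3 / n) +
          12 * (C ^ 2 * D * T ^ 3 / n) / (1 / (n * D) * (n / (2 * (C * T ^ 2)))))
        = n + 2 * (C ^ 2 * D * T ^ 3) + 24 * (C ^ 3 * D ^ 2 * T ^ 5) := by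
          field_simp
          ring
      _ ≤ n + 26 * (C ^ 3 * D ^ 2 * T ^ 5) := by linarith
  · rw [div_le_div_iff₀ hn0 two_pos]
    linarith
  · rw [hβc, ← mul_div_assoc, div_le_div_iff₀ hn0 (by positivity)]
    linarith

theorem exp_neg_le_permanent_weightedCoprimeMatrix [DecidableEq ι] [Nonempty ι]
    (ha : EquidistributedModOdd a) (hb : EquidistributedModOdd b)
    (ha' : ∀ i, a i ∈ Icc 1 (2 * Fintype.card ι)) (hb' : ∀ i, b i ∈ Icc 1 (2 * Fintype.card ι))
    (hP : ∀ p ∈ P, p.Prime ∧ 2 < p) (hθ : θ ∈ Set.Icc 0 1) (hC1 : 1 ≤ C)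
    (hC : ∀ m : ℕ, m ≠ 0 → (2 : ℝ) ^ #m.primeFactors ≤ C * (m : ℝ) ^ θ)
    (hD : weightEulerProd P θ ≤ D)
    (hn : 24 * (C ^ 3 * D ^ 2 * ((2 * Fintype.card ι : ℝ) ^ θ) ^ 5) ≤ Fintype.card ι) :
    exp (-(Fintype.card ι + 26 * (C ^ 3 * D ^ 2 * ((2 * Fintype.card ι : ℝ) ^ θ) ^ 5))) ≤
      (weightedCoprimeMatrix P a b).permanent := by
  set n : ℝ := (Fintype.card ι : ℝ) with hndef
  set T : ℝ := (2 * n) ^ θ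
  have hn1 : 1 ≤ n := Nat.one_le_cast.2 Fintype.card_pos
  have hT : 1 ≤ T := one_le_rpow (by linarith) hθ.1
  have hT2 : ((2 * n) ^ 2) ^ θ = T ^ 2 := (rpow_pow_comm (by positivity) θ 2).symm
  have hP2 : ∀ p ∈ P, 2 < p := fun p hp => (hP p hp).2
  have hD1 : 1 ≤ D := (one_le_weightEulerProd hP2 θ).trans hD
  have hne {m : ℕ} (hm : m ∈ Icc 1 (2 * Fintype.card ι)) : m ≠ 0 :=
    Nat.one_le_iff_ne_zero.1 (mem_Icc.1 hm).1
  have hle {m : ℕ} (hm : m ∈ Icc 1 (2 * Fintype.card ι)) : (m : ℝ) ≤ 2 * n := by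
    rw [hndef]
    exact_mod_cast (mem_Icc.1 hm).2
  have hω {m : ℕ} (hm : m ∈ Icc 1 (2 * Fintype.card ι)) : (2 : ℝ) ^ #m.primeFactors ≤ C * T :=
    two_pow_card_primeFactors_le_of_le hθ.1 (by linarith) hC (hne hm) (hle hm)
  have hδ : (C * T) ^ 2 * D * T / n = C ^ 2 * D * T ^ 3 / n := by ring
  refine exp_neg_le_permanent_of_approx_of_params hC1 hD1 hT hn
    (mul_coprimeInd_le_weightedCoprimeMatrix hP2 hθ.2 hD a b)
    (fun i => hδ ▸ hb.abs_sum_weightedCoprimeMatrix_sub_one_le hθ hP (hne (ha' i)) (hω (ha' i)) hD)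
    (fun j => ?_) (fun i j => coprimeInd_mem_Icc P (a i) (b j)) fun j j' => ?_
  · simp only [weightedCoprimeMatrix_comm a b]
    exact hδ ▸ ha.abs_sum_weightedCoprimeMatrix_sub_one_le hθ hP (hne (hb' j)) (hω (hb' j)) hD
  · have hjj' := mul_ne_zero (hne (hb' j)) (hne (hb' j'))
    refine ha.le_sum_coprimeInd_mul_coprimeInd hθ hP hjj' ?_ ?_
    · rw [← hT2]
      refine two_pow_card_primeFactors_le_of_le hθ.1 (by linarith) hC hjj' ?_
      rw [Nat.cast_mul, sq]
      exact mul_le_mul (hle (hb' j)) (hle (hb' j')) (by positivity) (by positivity)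
    · have hCD : C ^ 2 ≤ C ^ 3 * D ^ 2 := (pow_le_pow_right₀ hC1 (by norm_num)).trans
        (le_mul_of_one_le_right (by positivity) (one_le_pow₀ hD1))
      have := mul_le_mul_of_nonneg_right hCD (by positivity : 0 ≤ T ^ 5)
      nlinarith

theorem permanent_weightedCoprimeMatrix_nonneg [DecidableEq ι] (hP : ∀ p ∈ P, 2 < p)
    (a b : ι → ℕ) : 0 ≤ (weightedCoprimeMatrix P a b).permanent := by
  have hw : ∀ m, 0 ≤ primeWeight P m := fun m => zero_le_one.trans (one_le_primeWeight hP m)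
  have hK := one_le_weightEulerProd hP 1
  exact sum_nonneg fun σ _ => prod_nonneg fun i _ => div_nonneg
    (mul_nonneg (mul_nonneg (hw _) (hw _)) (coprimeInd_mem_Icc P _ _).1) (by positivity)

theorem coprimeConstOdd_mul_weightGeomMean_sq_le (hP : ∀ p ∈ P, p.Prime ∧ 2 < p) :
    coprimeConstOdd * weightGeomMean P ^ 2 ≤ weightEulerProd P 1 :=
  (mul_le_mul_of_nonneg_right (coprimeConstOdd_mem_Icc hP).2 (sq_nonneg _)).trans_eq
    (prod_localFactor_mul_weightGeomMean_sq fun p hp => (hP p hp).2)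

theorem mul_permanent_weightedCoprimeMatrix_le [DecidableEq ι] [Nonempty ι]
    (ha : EquidistributedModOdd a) (hb : EquidistributedModOdd b)
    (hP : ∀ p ∈ P, p.Prime ∧ 2 < p) {M : ℕ} (hPM : P ⊆ Icc 3 (M + 2)) :
    (Fintype.card ι * coprimeConstOdd) ^ Fintype.card ι * (weightedCoprimeMatrix P a b).permanent ≤
      (M + 1) ^ 2 * (coprimeMatrix P a b).permanent := by
  set n := Fintype.card ι
  set G := weightGeomMean P
  set w := (∏ i, primeWeight P (a i)) * ∏ i, primeWeight P (b i)
  have hP2 : ∀ p ∈ P, 2 < p := fun p hp => (hP p hp).2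
  have hB := permanent_weightedCoprimeMatrix_nonneg hP2 a b
  have hG : 0 ≤ G := prod_nonneg fun p hp => by
    have := (one_div_cast_sub_two_mem_Icc (hP2 p hp)).1
    positivity
  have hpos : ∀ v : ι → ℕ, 0 < ∏ i, primeWeight P (v i) := fun v =>
    prod_pos fun i _ => zero_lt_one.trans_le (one_le_primeWeight hP2 _)
  have hprod : ∀ {v : ι → ℕ}, EquidistributedModOdd v →
      ∏ i, primeWeight P (v i) ≤ G ^ n * (M + 1) := fun hv =>
    (hv.prod_primeWeight_le hP).trans
      (mul_le_mul_of_nonneg_left (prod_one_add_one_div_sub_two_le hPM) (by positivity))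
  have hw : w ≤ (G ^ 2) ^ n * (M + 1) ^ 2 :=
    (mul_le_mul (hprod ha) (hprod hb) (hpos b).le (by positivity)).trans_eq (by ring)
  have hconst := coprimeConstOdd_nonneg
  refine le_of_mul_le_mul_right ?_ (mul_pos (hpos a) (hpos b))
  calc (n * coprimeConstOdd) ^ n * (weightedCoprimeMatrix P a b).permanent * w
      ≤ (n * coprimeConstOdd) ^ n * (weightedCoprimeMatrix P a b).permanent *
          ((G ^ 2) ^ n * (M + 1) ^ 2) := by gcongr
    _ = (n * (coprimeConstOdd * G ^ 2)) ^ n *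
          (weightedCoprimeMatrix P a b).permanent * (M + 1) ^ 2 := by ring
    _ ≤ (n * weightEulerProd P 1) ^ n *
          (weightedCoprimeMatrix P a b).permanent * (M + 1) ^ 2 := by
      gcongr
      exact coprimeConstOdd_mul_weightGeomMean_sq_le hP
    _ = (M + 1) ^ 2 * (coprimeMatrix P a b).permanent * w := by
      rw [← permanent_coprimeMatrix hP2]
      ring

end WeightedMatrix

theorem coprimeOddBijCount_eq_permanent {P : Finset ℕ} {n : ℕ} (hP : ∀ p ∈ P, p.Prime)
    (hodd : ∀ j : Fin n, (2 * (j : ℕ) + 1).primeFactors ⊆ P) :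
    (coprimeOddBijCount n : ℝ) =
      (coprimeMatrix P (fun i : Fin n => (i : ℕ) + 1) fun j => 2 * (j : ℕ) + 1).permanent := by
  have hind : ∀ (i j : Fin n), coprimeInd P (i + 1) (2 * j + 1) =
      if Nat.gcd (2 * j + 1) (i + 1) = 1 then 1 else 0 := fun i j => by
    rw [coprimeInd_comm, coprimeInd_eq_ite hP (by omega) (hodd j)]
  simp only [Matrix.permanent, coprimeMatrix, Matrix.of_apply, hind, prod_boole, mem_univ,
    true_imp_iff]
  rw [sum_boole, coprimeOddBijCount, Nat.card_eq_fintype_card, Fintype.card_subtype]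

/-- The primes in `[3, N]`. -/
def oddPrimesLE (N : ℕ) : Finset ℕ := {p ∈ Icc 3 N | p.Prime}

theorem prime_and_two_lt_of_mem_oddPrimesLE {N p : ℕ} (hp : p ∈ oddPrimesLE N) :
    p.Prime ∧ 2 < p :=
  ⟨(mem_filter.1 hp).2, (mem_Icc.1 (mem_filter.1 hp).1).1⟩

theorem primeFactors_subset_oddPrimesLE {u N : ℕ} (hu : Odd u) (huN : u ≤ N) :
    u.primeFactors ⊆ oddPrimesLE N := fun p hp => by
  have hprime := Nat.prime_of_mem_primeFactors hp
  have hp2 : p ≠ 2 := fun h => Nat.not_even_iff_odd.2 hu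
    (even_iff_two_dvd.2 (h ▸ Nat.dvd_of_mem_primeFactors hp))
  exact mem_filter.2 ⟨mem_Icc.2 ⟨hprime.two_le.lt_of_ne' hp2,
    (Nat.le_of_mem_primeFactors hp).trans huN⟩, hprime⟩

theorem exp_neg_le_coprimeOddBijCount {n : ℕ} (hn0 : 0 < n) {θ C D : ℝ} (hθ : θ ∈ Set.Icc 0 1)
    (hC1 : 1 ≤ C) (hC : ∀ m : ℕ, m ≠ 0 → (2 : ℝ) ^ #m.primeFactors ≤ C * (m : ℝ) ^ θ)
    (hD : weightEulerProd (oddPrimesLE (2 * n)) θ ≤ D)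
    (hn : 24 * (C ^ 3 * D ^ 2 * ((2 * n : ℝ) ^ θ) ^ 5) ≤ n) :
    exp (-(n + 26 * (C ^ 3 * D ^ 2 * ((2 * n : ℝ) ^ θ) ^ 5))) * (n * coprimeConstOdd) ^ n ≤
      (2 * n) ^ 2 * coprimeOddBijCount n := by
  have : Nonempty (Fin n) := ⟨⟨0, hn0⟩⟩
  have hP : ∀ p ∈ oddPrimesLE (2 * n), p.Prime ∧ 2 < p :=
    fun _ => prime_and_two_lt_of_mem_oddPrimesLE
  have hPM : oddPrimesLE (2 * n) ⊆ Icc 3 ((2 * n - 2) + 2) := by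
    rw [Nat.sub_add_cancel (by omega)]
    exact filter_subset _ _
  have hM : ((2 * n - 2 : ℕ) : ℝ) + 1 ≤ 2 * n := by
    exact_mod_cast (by omega : 2 * n - 2 + 1 ≤ 2 * n)
  have hper := exp_neg_le_permanent_weightedCoprimeMatrix (equidistributedModOdd_succ n)
    (equidistributedModOdd_odd n) (fun i => mem_Icc.2 ⟨by omega, by rw [Fintype.card_fin]; omega⟩)
    (fun j => mem_Icc.2 ⟨by omega, by rw [Fintype.card_fin]; omega⟩) hP hθ hC1 hC hD
    (by rwa [Fintype.card_fin])
  have hmul := mul_permanent_weightedCoprimeMatrix_le (equidistributedModOdd_succ n)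
    (equidistributedModOdd_odd n) hP hPM
  rw [← coprimeOddBijCount_eq_permanent (fun p hp => (hP p hp).1) fun j =>
    primeFactors_subset_oddPrimesLE (odd_two_mul_add_one _) (by omega)] at hmul
  rw [Fintype.card_fin] at hper hmul
  have hconst := coprimeConstOdd_nonneg
  calc _ ≤ _ := mul_le_mul_of_nonneg_right hper (by positivity)
    _ ≤ (((2 * n - 2 : ℕ) : ℝ) + 1) ^ 2 * coprimeOddBijCount n := (mul_comm _ _).trans_le hmul
    _ ≤ (2 * n) ^ 2 * coprimeOddBijCount n := by gcongr

/-! ### Asymptotics -/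

theorem factorial_le_exp_one_mul {n : ℕ} (hn : n ≠ 0) :
    (n.factorial : ℝ) ≤ exp 1 * n * (n / exp 1) ^ n := by
  obtain ⟨m, rfl⟩ := Nat.exists_eq_succ_of_ne_zero hn
  have hseq := Stirling.stirlingSeq'_antitone m.zero_le
  simp only [Function.comp_apply, Nat.succ_eq_add_one, zero_add, Stirling.stirlingSeq_one] at hseq
  rw [Stirling.stirlingSeq, div_le_iff₀ (by positivity)] at hseq
  have hm : (1 : ℝ) ≤ (m + 1 : ℕ) := by exact_mod_cast m.succ_pos
  calc ((m + 1).factorial : ℝ)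
      ≤ exp 1 / √2 * (√(2 * (m + 1 : ℕ)) * ((m + 1 : ℕ) / exp 1) ^ (m + 1)) := hseq
    _ = exp 1 * √(m + 1 : ℕ) * ((m + 1 : ℕ) / exp 1) ^ (m + 1) := by
      rw [sqrt_mul zero_le_two]
      field_simp
    _ ≤ exp 1 * (m + 1 : ℕ) * ((m + 1 : ℕ) / exp 1) ^ (m + 1) := by
      gcongr
      exact Real.sqrt_le_self_iff.2 (.inr hm)

theorem exp_neg_mul_factorial_mul_le {n : ℕ} (hn : n ≠ 0) {X c K : ℝ} (hc : 0 ≤ c)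
    (h : exp (-(n + X)) * (n * c) ^ n ≤ (2 * n) ^ 2 * K) :
    exp (-(1 + log 4 + 3 * log n + X)) * n.factorial * c ^ n ≤ K := by
  have hn0 : (0 : ℝ) < n := Nat.cast_pos.2 hn.bot_lt
  have hexp : exp (-(1 + log 4 + 3 * log n + X)) * (exp 1 * n * (2 * n) ^ 2) = exp (-X) := by
    have hlog : exp (3 * log n) = (n : ℝ) ^ 3 := by
      rw [← exp_log hn0, ← exp_nat_mul, log_exp, Nat.cast_ofNat]
    rw [neg_add, exp_add, exp_neg (1 + _ + _), exp_add, exp_add, exp_log four_pos, hlog]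
    field_simp
    ring
  refine le_of_mul_le_mul_left ?_ (by positivity : (0 : ℝ) < (2 * n) ^ 2)
  calc (2 * n : ℝ) ^ 2 * (exp (-(1 + log 4 + 3 * log n + X)) * n.factorial * c ^ n)
      ≤ (2 * n) ^ 2 * (exp (-(1 + log 4 + 3 * log n + X)) *
          (exp 1 * n * (n / exp 1) ^ n) * c ^ n) := by
        gcongr
        exact factorial_le_exp_one_mul hn
    _ = exp (-(1 + log 4 + 3 * log n + X)) * (exp 1 * n * (2 * n) ^ 2) *
          ((n / exp 1) ^ n * c ^ n) := by ring
    _ = exp (-(n + X)) * (n * c) ^ n := by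
        rw [hexp, neg_add, exp_add, exp_neg n, ← exp_one_pow n, div_pow, mul_pow]
        ring
    _ ≤ (2 * n) ^ 2 * K := h

theorem rpow_isLittleO_rpow_atTop {r s : ℝ} (h : r < s) :
    (fun x : ℝ => x ^ r) =o[atTop] fun x => x ^ s := by
  refine Asymptotics.isLittleO_of_tendsto' ?_ ((tendsto_rpow_neg_atTop (sub_pos.2 h)).congr' ?_)
  · filter_upwards [eventually_gt_atTop 0] with x hx h0
    exact absurd h0 (rpow_pos_of_pos hx s).ne'
  · filter_upwards [eventually_gt_atTop 0] with x hx
    rw [neg_sub, rpow_sub hx]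

theorem eventually_const_add_log_add_rpow_le (c A : ℝ) {θ ε : ℝ} (hε : 0 < ε) (hθε : 5 * θ < ε) :
    ∀ᶠ n : ℕ in atTop, c + 3 * log n + A * ((2 * n : ℝ) ^ θ) ^ 5 ≤ (n : ℝ) ^ ε := by
  have hpow : (fun x : ℝ => ((2 * x) ^ θ) ^ 5) =o[atTop] fun x => x ^ ε := by
    refine ((rpow_isLittleO_rpow_atTop hθε).const_mul_left ((2 : ℝ) ^ (5 * θ))).congr' ?_ .rfl
    filter_upwards [eventually_ge_atTop 0] with x hx
    rw [← mul_rpow zero_le_two hx, ← rpow_mul_natCast (by positivity), Nat.cast_ofNat, mul_comm θ]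
  have hconst : (fun _ : ℝ => c) =o[atTop] fun x : ℝ => x ^ ε :=
    Asymptotics.isLittleO_const_left.2 (.inr (tendsto_norm_atTop_atTop.comp
      (tendsto_rpow_atTop hε)))
  have hsum := (hconst.add ((isLittleO_log_rpow_atTop hε).const_mul_left 3)).add
    (hpow.const_mul_left A)
  filter_upwards [tendsto_natCast_atTop_atTop.eventually (hsum.bound one_pos)] with n hn
  rw [norm_of_nonneg (by positivity : (0 : ℝ) ≤ (n : ℝ) ^ ε), one_mul] at hn
  exact (le_abs_self _).trans hn

theorem coprimeOddBijCount_lower_general {ε : ℝ} (hε : 0 < ε) :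
    ∀ᶠ n : ℕ in atTop,
      exp (-(n : ℝ) ^ ε) * n.factorial * coprimeConstOdd ^ n ≤ coprimeOddBijCount n := by
  set δ := min ε 1
  have hδ : 0 < δ := lt_min hε one_pos
  have hθ : δ / 6 ∈ Set.Icc (0 : ℝ) 1 := ⟨by positivity, by linarith [min_le_right ε 1]⟩
  obtain ⟨C, hC1, hC⟩ := exists_two_pow_card_primeFactors_le (by positivity : 0 < δ / 6)
  obtain ⟨D, hD⟩ := exists_weightEulerProd_le (by positivity : 0 < δ / 6)
  filter_upwards [eventually_const_add_log_add_rpow_le (1 + log 4) (26 * (C ^ 3 * D ^ 2)) hδ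
    (by linarith : 5 * (δ / 6) < δ), eventually_ge_atTop 1] with n hlarge hn
  have hn0 : 0 < n := hn
  have hn1 : (1 : ℝ) ≤ n := Nat.one_le_cast.2 hn
  have hconst := coprimeConstOdd_nonneg
  rw [mul_assoc 26] at hlarge
  have hX : 0 ≤ C ^ 3 * D ^ 2 * ((2 * n : ℝ) ^ (δ / 6)) ^ 5 := by positivity
  have hlog : 0 ≤ log 4 + 3 * log n := by positivity
  have hδn : (n : ℝ) ^ δ ≤ n := rpow_le_self_of_one_le hn1 (min_le_right ε 1)
  have hbound := exp_neg_le_coprimeOddBijCount hn0 hθ hC1 hC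
    (hD _ fun _ hp => (prime_and_two_lt_of_mem_oddPrimesLE hp).2)
    (by linarith [hX, hlog, hlarge, hδn])
  refine le_trans ?_ (exp_neg_mul_factorial_mul_le hn0.ne' hconst hbound)
  gcongr
  exact hlarge.trans (rpow_le_rpow_of_exponent_le hn1 (min_le_left ε 1))

theorem exp_neg_log_div_le_ap {n : ℕ} (hn : 1 ≤ log (log n)) :
    exp (-(log n / 1024)) ≤ ap n := by
  have hlog : 0 ≤ log n := log_natCast_nonneg n
  have hkp : 0 ≤ kp n := by
    rw [kp]
    positivity
  refine exp_le_exp.2 (neg_le_neg ?_)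
  calc kp n * log (kp n) ≤ kp n * kp n := mul_le_mul_of_nonneg_left (log_le_self hkp) hkp
    _ = log n / log (log n) / 1024 := by
      rw [kp, mul_mul_mul_comm, mul_self_sqrt (div_nonneg hlog (zero_le_one.trans hn))]
      norm_num
      ring
    _ ≤ log n / 1024 := by
      gcongr
      exact div_le_self hlog hn

theorem eventually_rpow_half_le_mul_ap_rpow :
    ∀ᶠ n : ℕ in atTop, (n : ℝ) ^ (1 / 2 : ℝ) ≤ n * ap n ^ (1 / 4 : ℝ) := by
  have hloglog : Tendsto (fun n : ℕ => log (log n)) atTop atTop :=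
    tendsto_log_atTop.comp (tendsto_log_atTop.comp tendsto_natCast_atTop_atTop)
  filter_upwards [hloglog.eventually_ge_atTop 1, eventually_ge_atTop 1] with n hn hn1
  have hn0 : (0 : ℝ) < n := Nat.cast_pos.2 hn1
  calc (n : ℝ) ^ (1 / 2 : ℝ) ≤ n * exp (-(log n / 1024)) ^ (1 / 4 : ℝ) := by
        rw [← exp_mul, rpow_def_of_pos hn0]
        nth_rw 2 [← exp_log hn0]
        rw [← exp_add]
        exact exp_le_exp.2 (by linarith [log_natCast_nonneg n])
    _ ≤ n * ap n ^ (1 / 4 : ℝ) := by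
        gcongr
        exact exp_neg_log_div_le_ap hn

end

/-- For all sufficiently large `n`,
`C₀(n) ≥ exp(−n·α^{1/4}) · n! · (∏_{p > 2} (p−1)^{2(1−1/p)}/(p·(p−2)^{1−2/p}))^n`. -/
theorem coprimeOddBijCount_lower :
    ∃ N : ℕ, ∀ n : ℕ, N ≤ n →
      Real.exp (-(n : ℝ) * ap n ^ ((1 : ℝ) / 4)) * (n.factorial : ℝ) * coprimeConstOdd ^ n
        ≤ (coprimeOddBijCount n : ℝ) := by
  refine Filter.eventually_atTop.1 ?_
  filter_upwards [coprimeOddBijCount_lower_general one_half_pos,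
    eventually_rpow_half_le_mul_ap_rpow] with n hgeneral hap
  have hconst := coprimeConstOdd_nonneg
  refine le_trans ?_ hgeneral
  rw [neg_mul]
  gcongr
end

section
/- Fix an integer k ≥ 2, and let C_k(n) denote the number of permutations σ of [n] = {1,…,n} such that gcd(ℓ, σ(ℓ), k!) = 1 for all ℓ ∈ [n]. Then there exists a constant K = K(k) > 0 such that for all n ≥ 2, n!·(∏_{p prime, p ≤ k} (p−1)^{2(1−1/p)} / (p·(p−2)^{1−2/p}))^n · exp(−K log n) ≤ C_k(n) ≤ n!·(∏_{p prime, p ≤ k} (p−1)^{2(1−1/p)} / (p·(p−2)^{1−2/p}))^n · exp(K log n), where the factor at p = 2 is interpreted as 1/2 (equivalently, 0^0 = 1). -/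
open Real

/-- `C_k(n)`: the number of permutations `σ` of `{1, …, n}` with `gcd(ℓ, σ(ℓ), k!) = 1`
for all `ℓ ∈ {1, …, n}`. -/
noncomputable def kCoprimePermCount (k n : ℕ) : ℕ :=
  Nat.card {σ : Equiv.Perm (Fin n) //
    ∀ ℓ : Fin n, Nat.gcd (Nat.gcd (ℓ.1 + 1) ((σ ℓ).1 + 1)) k.factorial = 1}

/-!
Color `ℓ ∈ {1, …, n}` by its residues modulo pairwise coprime integers `m i`; whether some `m i`
divides both `ℓ` and `σ ℓ` depends only on the colors of `ℓ` and `σ ℓ`. A coloring arises as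
`ℓ ↦ color (σ ℓ)` from at most `∏ s, (#class s)!` permutations, and this number is within a
polynomial factor of `n! / P ^ n`, where `P = ∏ i, m i`.

For the upper bound, weight each color by a product of factors `w i`, one for each nonzero residue.
Every rearrangement of the colors has the same total weight, so the number of admissible
rearrangements is bounded by a sum over all functions, which factors over `ℓ` and over the moduli.

For the lower bound, let `n` be a suitable multiple of `P` and choose a permutation `σ₀` for which
the pairs (color of `ℓ`, color of `σ₀ ℓ`) are distributed as a product over the moduli of couplings
of uniform residues that avoid `(0, 0)`. Every `g * σ₀ * h` with color-preserving `g` and `h` is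
admissible, and few pairs `(g, h)` give the same product.

The bounds have the same growth rate because `w i` may be taken (almost) equal to
`(m i - 2) / (m i - 1)`, the ratio of the probabilities in the coupling. To pass from multiples of
the period to all `n`, extend a permutation by swapping consecutive integers, which are coprime.
-/

open Finset Equiv

open scoped Nat

section Colorings

variable {α β κ : Type*} [Fintype α] [Fintype β]

theorem exists_equiv_comp_eq [DecidableEq κ] {f : α → κ} {g : β → κ}
    (h : ∀ s, #{a | f a = s} = #{b | g b = s}) : ∃ e : α ≃ β, g ∘ e = f := by
  have fiberEquiv (s : κ) : Nonempty ({a // f a = s} ≃ {b // g b = s}) := by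
    rw [← Fintype.card_eq, Fintype.card_subtype, Fintype.card_subtype, h]
  exact ⟨ofFiberEquiv fun s => (fiberEquiv s).some, funext (ofFiberEquiv_map _)⟩

theorem card_filter_sigma_fin [Fintype κ] (N : κ → ℕ) (p : κ → Prop) [DecidablePred p] :
    #{x : Σ s, Fin (N s) | p x.1} = ∑ s with p s, N s := by
  rw [card_filter, Fintype.sum_sigma, sum_filter]
  refine sum_congr rfl fun s _ => ?_
  by_cases hs : p s <;> simp [hs]

variable [Fintype κ] [DecidableEq κ]

theorem card_perm_comp_eq_self (c : α → κ) :
    Nat.card {σ : Perm α // c ∘ σ = c} = ∏ s, (#{a | c a = s})! := by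
  classical
  rw [Nat.card_eq_fintype_card, DomMulAct.stabilizer_card]
  simp only [Fintype.card_subtype]

theorem card_perm_comp_eq_le (c f : α → κ) :
    Nat.card {σ : Perm α // c ∘ σ = f} ≤ ∏ s, (#{a | c a = s})! := by
  rw [← card_perm_comp_eq_self]
  rcases isEmpty_or_nonempty {σ : Perm α // c ∘ σ = f} with _ | ⟨τ, rfl⟩
  · simp
  · refine Nat.card_le_card_of_injective (fun σ => ⟨σ.1 * τ⁻¹, ?_⟩) fun σ σ' h =>
      Subtype.ext (mul_right_cancel (Subtype.ext_iff.1 h))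
    funext a
    simpa using congrFun σ.2 (τ⁻¹ a)

-- Expand the product on the right over all colorings `f` with `R (c a) (f a)`: each `f` is `c ∘ σ`
-- for at most `∏ s, (#{a | c a = s})!` permutations `σ`, and `∏ a, y (c (σ a))` does not depend
-- on `σ`.
theorem card_perm_mul_prod_le (c : α → κ) (R : κ → κ → Prop) [DecidableRel R] {y : κ → ℝ}
    (hy : ∀ s, 0 ≤ y s) :
    Nat.card {σ : Perm α // ∀ a, R (c a) (c (σ a))} * ∏ a, y (c a) ≤
      (∏ s, (#{a | c a = s})! : ℕ) * ∏ a, ∑ s with R (c a) s, y s := by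
  classical
  let A : Finset (Perm α) := {σ | ∀ a, R (c a) (c (σ a))}
  have card_eq : Nat.card {σ : Perm α // ∀ a, R (c a) (c (σ a))} = #A := by
    rw [Nat.card_eq_fintype_card, Fintype.card_subtype]
  have maps_to : ∀ σ ∈ A, c ∘ σ ∈ Fintype.piFinset fun a => ({s | R (c a) s} : Finset κ) := by
    simp [A]
  have card_fiber_le (f : α → κ) :
      #(A.filter fun σ : Perm α => c ∘ σ = f) ≤ ∏ s, (#{a | c a = s})! := by
    refine (card_le_card (filter_subset_filter _ (filter_subset _ univ))).trans ?_
    simpa [Fintype.card_subtype] using card_perm_comp_eq_le c f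
  calc Nat.card {σ : Perm α // ∀ a, R (c a) (c (σ a))} * ∏ a, y (c a)
      = ∑ σ ∈ A, ∏ a, y ((c ∘ σ) a) := by
        rw [card_eq]
        simp [fun σ : Perm α => Equiv.prod_comp σ fun a => y (c a)]
    _ = ∑ f ∈ Fintype.piFinset fun a => {s | R (c a) s},
          #(A.filter fun σ : Perm α => c ∘ σ = f) * ∏ a, y (f a) := by
        rw [← sum_fiberwise_of_maps_to' maps_to fun f => ∏ a, y (f a)]
        simp only [sum_const, nsmul_eq_mul]
    _ ≤ ∑ f ∈ Fintype.piFinset fun a => {s | R (c a) s},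
          (∏ s, (#{a | c a = s})! : ℕ) * ∏ a, y (f a) := by
        gcongr with f
        · exact prod_nonneg fun a _ => hy _
        · exact card_fiber_le f
    _ = (∏ s, (#{a | c a = s})! : ℕ) * ∏ a, ∑ s with R (c a) s, y s := by
        rw [← mul_sum, prod_univ_sum]

theorem exists_perm_card_eq {c : α → κ} {N : κ → κ → ℕ}
    (hrow : ∀ r, ∑ s, N r s = #{a | c a = r}) (hcol : ∀ s, ∑ r, N r s = #{a | c a = s}) :
    ∃ σ : Perm α, ∀ r s, #{a | c a = r ∧ c (σ a) = s} = N r s := by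
  obtain ⟨e₁, he₁⟩ : ∃ e : α ≃ Σ x : κ × κ, Fin (N x.1 x.2), (fun x => x.1.1) ∘ e = c :=
    exists_equiv_comp_eq fun r => by
      rw [card_filter_sigma_fin (fun x : κ × κ => N x.1 x.2) fun x => x.1 = r, ← hrow]
      simp [sum_filter, Fintype.sum_prod_type_right]
  obtain ⟨e₂, he₂⟩ : ∃ e : α ≃ Σ x : κ × κ, Fin (N x.1 x.2), (fun x => x.1.2) ∘ e = c :=
    exists_equiv_comp_eq fun s => by
      rw [card_filter_sigma_fin (fun x : κ × κ => N x.1 x.2) fun x => x.2 = s, ← hcol]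
      simp [sum_filter, Fintype.sum_prod_type]
  refine ⟨e₁.trans e₂.symm, fun r s => ?_⟩
  have source (a : α) : c a = (e₁ a).1.1 := (congrFun he₁ a).symm
  have target (a : α) : c (e₁.trans e₂.symm a) = (e₁ a).1.2 := by simp [← he₂]
  calc #{a | c a = r ∧ c (e₁.trans e₂.symm a) = s}
      = #{x : Σ x : κ × κ, Fin (N x.1 x.2) | x.1 = (r, s)} :=
        card_equiv e₁ fun a => by
          rw [mem_filter, mem_filter, source, target, Prod.ext_iff]
          simp
    _ = N r s := by
        rw [card_filter_sigma_fin (fun x : κ × κ => N x.1 x.2) fun x => x = (r, s)]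
        simp [filter_eq']

-- Count the products `g * σ₀ * h` with `g` and `h` preserving colors: for fixed `τ = g * σ₀ * h`,
-- the permutation `h` determines `g` and sends the coloring by `(c, c ∘ σ₀)` to that by
-- `(c, c ∘ τ)`.
theorem sq_prod_factorial_le_card_perm_mul (c : α → κ) {R : κ → κ → Prop} {σ₀ : Perm α}
    (hσ₀ : ∀ a, R (c a) (c (σ₀ a))) :
    (∏ s, (#{a | c a = s})!) ^ 2 ≤ Nat.card {σ : Perm α // ∀ a, R (c a) (c (σ a))} *
      ∏ r, ∏ s, (#{a | c a = r ∧ c (σ₀ a) = s})! := by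
  classical
  let G : Finset (Perm α) := {g | c ∘ g = c}
  have mem_G {g} : g ∈ G ↔ ∀ a, c (g a) = c a := by simp [G, funext_iff]
  have card_G : #G = ∏ s, (#{a | c a = s})! := by
    rw [← card_perm_comp_eq_self, Nat.card_eq_fintype_card, Fintype.card_subtype]
  rw [← card_G, sq, ← card_product, Nat.card_eq_fintype_card, Fintype.card_subtype, mul_comm]
  refine card_le_mul_card_image_of_maps_to (f := fun x => x.1 * σ₀ * x.2) ?_ _ fun τ _ => ?_
  · rintro ⟨g, h⟩ hgh
    rw [mem_product, mem_G, mem_G] at hgh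
    simpa [hgh.1, hgh.2] using fun a => hgh.2 a ▸ hσ₀ (h a)
  · calc #{x ∈ G ×ˢ G | x.1 * σ₀ * x.2 = τ}
        ≤ #{h : Perm α | (fun a => (c a, c (σ₀ a))) ∘ h = fun a => (c a, c (τ a))} := by
          refine card_le_card_of_injOn Prod.snd ?_ ?_
          · rintro ⟨g, h⟩ hgh
            obtain ⟨hmem, rfl⟩ := mem_filter.1 hgh
            rw [mem_product, mem_G, mem_G] at hmem
            simp [funext_iff, hmem.1, hmem.2]
          · rintro ⟨g, h⟩ hgh ⟨g', h'⟩ hgh' (rfl : h = h')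
            simpa using (mem_filter.1 hgh).2.trans (mem_filter.1 hgh').2.symm
      _ ≤ ∏ x : κ × κ, (#{a | (c a, c (σ₀ a)) = x})! := by
          simpa [Fintype.card_subtype] using card_perm_comp_eq_le
            (fun a => (c a, c (σ₀ a))) fun a => (c a, c (τ a))
      _ = _ := by simp [Fintype.prod_prod_type]

end Colorings

theorem factorial_mul_le (q t : ℕ) : (q * t)! ≤ q ! ^ t * t ^ (q * t) := by
  induction q with
  | zero => simp
  | succ q ih =>
    calc ((q + 1) * t)! = (q * t)! * (q * t + 1).ascFactorial t := by
          rw [Nat.factorial_mul_ascFactorial, add_mul, one_mul]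
      _ ≤ q ! ^ t * t ^ (q * t) * (q * t + t) ^ t :=
          Nat.mul_le_mul ih (Nat.ascFactorial_le_pow_add _ _)
      _ = (q + 1)! ^ t * t ^ ((q + 1) * t) := by
          rw [Nat.factorial_succ, mul_pow, ← Nat.succ_mul, Nat.succ_eq_add_one, mul_pow]
          ring

theorem factorial_pow_mul_le (q t : ℕ) : q ! ^ t * t ^ (q * t) ≤ (q * t)! * (q * t + 1) ^ t := by
  induction q with
  | zero => simp
  | succ q ih =>
    calc (q + 1)! ^ t * t ^ ((q + 1) * t) = q ! ^ t * t ^ (q * t) * ((q + 1) * t) ^ t := by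
          rw [Nat.factorial_succ, mul_pow, mul_pow]
          ring
      _ ≤ (q * t)! * (q * t + 1) ^ t * ((q + 1) * t + 1) ^ t := by
          gcongr
          exact Nat.le_succ _
      _ ≤ ((q + 1) * t)! * ((q + 1) * t + 1) ^ t := by
          rw [add_mul, one_mul]
          gcongr
          exact Nat.factorial_mul_pow_le_factorial

theorem factorial_div_add_one_pow_mul_le (n : ℕ) {q : ℕ} (hq : 0 < q) :
    (n / q + 1)! ^ q * q ^ n ≤ n ! * ((n + 1) ^ (2 * q) * q ^ q) := by
  have hn : n ≤ n / q * q + q := by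
    have := Nat.div_add_mod' n q
    have := Nat.mod_lt n hq
    omega
  calc (n / q + 1)! ^ q * q ^ n ≤ (n + 1) ^ q * (n / q)! ^ q * (q ^ (n / q * q) * q ^ q) := by
        rw [Nat.factorial_succ, mul_pow, ← pow_add]
        gcongr
        exact Nat.div_le_self n q
    _ = (n + 1) ^ q * ((n / q)! ^ q * q ^ (n / q * q)) * q ^ q := by ring
    _ ≤ (n + 1) ^ q * ((n / q * q)! * (n / q * q + 1) ^ q) * q ^ q := by
        gcongr (n + 1) ^ q * ?_ * q ^ q
        exact factorial_pow_mul_le _ _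
    _ ≤ (n + 1) ^ q * (n ! * (n + 1) ^ q) * q ^ q := by
        gcongr <;> exact Nat.div_mul_le_self n q
    _ = n ! * ((n + 1) ^ (2 * q) * q ^ q) := by ring

theorem factorial_add_le (a : ℕ) {b T : ℕ} (h : b ≤ T) : (a + b)! ≤ a ! * (a + b + 1) ^ T :=
  calc (a + b)! = a ! * (a + 1).ascFactorial b := (Nat.factorial_mul_ascFactorial a b).symm
    _ ≤ a ! * (a + b) ^ b := Nat.mul_le_mul_left _ (Nat.ascFactorial_le_pow_add a b)
    _ ≤ a ! * (a + b + 1) ^ b := Nat.mul_le_mul_left _ (Nat.pow_le_pow_left (Nat.le_succ _) b)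
    _ ≤ a ! * (a + b + 1) ^ T :=
        Nat.mul_le_mul_left _ (Nat.pow_le_pow_right (Nat.succ_pos _) h)

section Couplings

variable {α κ : Type*} [Fintype α] [Fintype κ] [DecidableEq κ] {c : α → κ} {R : κ → κ → Prop}
  {w : κ → κ → ℕ} {D t : ℕ}

theorem factorial_pow_le_card_perm_mul (hclass : ∀ s, #{a | c a = s} = t * D)
    (hrow : ∀ r, ∑ s, w r s = D) (hcol : ∀ s, ∑ r, w r s = D) (hR : ∀ r s, w r s ≠ 0 → R r s) :
    (t * D)! ^ (2 * Fintype.card κ) ≤ Nat.card {σ : Perm α // ∀ a, R (c a) (c (σ a))} *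
      (t ! ^ (Fintype.card κ * D) * (∏ r, ∏ s, w r s ^ w r s) ^ t) := by
  obtain ⟨σ₀, hσ₀⟩ : ∃ σ : Perm α, ∀ r s, #{a | c a = r ∧ c (σ a) = s} = t * w r s :=
    exists_perm_card_eq (fun r => by rw [← mul_sum, hrow, hclass])
      fun s => by rw [← mul_sum, hcol, hclass]
  have hσ₀R (a : α) : R (c a) (c (σ₀ a)) := hR _ _ <| right_ne_zero_of_mul (a := t) <| by
    rw [← hσ₀]
    exact card_ne_zero_of_mem (a := a) (by simp)
  calc (t * D)! ^ (2 * Fintype.card κ) = (∏ s, (#{a | c a = s})!) ^ 2 := by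
        simp only [hclass, prod_const, card_univ]
        ring
    _ ≤ Nat.card {σ : Perm α // ∀ a, R (c a) (c (σ a))} * ∏ r, ∏ s, (t * w r s)! := by
        simpa only [hσ₀] using sq_prod_factorial_le_card_perm_mul c hσ₀R
    _ ≤ Nat.card {σ : Perm α // ∀ a, R (c a) (c (σ a))} *
          ∏ r, ∏ s, (t ! ^ w r s * (w r s ^ w r s) ^ t) := by
        gcongr with r _ s _
        rw [← pow_mul, mul_comm (w r s)]
        exact factorial_mul_le _ _
    _ = _ := by
        simp only [prod_mul_distrib, prod_pow, prod_pow_eq_pow_sum, hrow, prod_const, card_univ]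
        ring

theorem factorial_card_mul_pow_le_card_perm_mul (hclass : ∀ s, #{a | c a = s} = t * D)
    (hrow : ∀ r, ∑ s, w r s = D) (hcol : ∀ s, ∑ r, w r s = D) (hR : ∀ r s, w r s ≠ 0 → R r s) :
    (Fintype.card α)! * D ^ Fintype.card α ≤
      Nat.card {σ : Perm α // ∀ a, R (c a) (c (σ a))} *
        (Fintype.card κ ^ Fintype.card α * (∏ r, ∏ s, w r s ^ w r s) ^ t *
          (t * D + 1) ^ (2 * Fintype.card κ * D)) := by
  have classes_le := factorial_pow_le_card_perm_mul hclass hrow hcol hR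
  set C := Nat.card {σ : Perm α // ∀ a, R (c a) (c (σ a))}
  set V := ∏ r, ∏ s, w r s ^ w r s
  set q := Fintype.card κ
  have card_eq : Fintype.card α = t * (q * D) := by
    rw [← card_univ, card_eq_sum_card_fiberwise fun a _ => mem_univ (c a)]
    simp only [hclass, sum_const, card_univ, smul_eq_mul]
    ring
  refine Nat.le_of_mul_le_mul_left ?_ (pow_pos t.factorial_pos (q * D))
  rw [card_eq]
  calc t ! ^ (q * D) * ((t * (q * D))! * D ^ (t * (q * D)))
      ≤ t ! ^ (q * D) * (t ! ^ (q * D) * (q * D) ^ (t * (q * D)) * D ^ (t * (q * D))) := by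
        gcongr
        exact factorial_mul_le t (q * D)
    _ = (t ! ^ D * D ^ (t * D)) ^ (2 * q) * q ^ (t * (q * D)) := by ring
    _ ≤ ((t * D)! * (t * D + 1) ^ D) ^ (2 * q) * q ^ (t * (q * D)) := by
        gcongr ?_ ^ _ * _
        exact factorial_pow_mul_le t D
    _ = (t * D)! ^ (2 * q) * ((t * D + 1) ^ (2 * q * D) * q ^ (t * (q * D))) := by ring
    _ ≤ C * (t ! ^ (q * D) * V ^ t) * ((t * D + 1) ^ (2 * q * D) * q ^ (t * (q * D))) := by gcongr
    _ = t ! ^ (q * D) * (C * (q ^ (t * (q * D)) * V ^ t * (t * D + 1) ^ (2 * q * D))) := by ring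

end Couplings

section ProductWeights

variable {ι : Type*} [Fintype ι] [DecidableEq ι] {X Y : ι → Type*} [∀ i, Fintype (X i)]
  [∀ i, Fintype (Y i)]

theorem sum_filter_apply_eq_prod {S : Type*} [CommSemiring S] [∀ i, DecidableEq (X i)]
    (f : ∀ i, X i → S) (i : ι) (a : X i) :
    ∑ x : ∀ j, X j with x i = a, ∏ j, f j (x j) = f i a * ∏ j ∈ univ.erase i, ∑ b, f j b := by
  have filter_eq : ({x | x i = a} : Finset (∀ j, X j)) =
      Fintype.piFinset (Function.update (fun _ => univ) i {a}) := by
    rw [Fintype.piFinset_update_singleton_eq_filter_piFinset_eq (fun j => (univ : Finset (X j))) i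
      (mem_univ a),
      Fintype.piFinset_univ]
  rw [filter_eq, ← prod_univ_sum, ← mul_prod_erase _ _ (mem_univ i), Function.update_self,
    sum_singleton]
  congr 1
  refine prod_congr rfl fun j hj => ?_
  rw [Function.update_of_ne (ne_of_mem_erase hj)]

theorem prod_pi_pow_self (w : ∀ i, X i → ℕ) :
    ∏ x : ∀ i, X i, (∏ i, w i (x i)) ^ ∏ i, w i (x i) =
      ∏ i, (∏ a, w i a ^ w i a) ^ ∏ j ∈ univ.erase i, ∑ b, w j b := by
  classical
  simp only [← prod_pow]
  rw [prod_comm]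
  refine prod_congr rfl fun i _ => ?_
  calc ∏ x : ∀ i, X i, w i (x i) ^ ∏ j, w j (x j)
      = ∏ a, ∏ x : ∀ i, X i with x i = a, w i a ^ ∏ j, w j (x j) := by
        rw [← prod_fiberwise _ fun x : ∀ i, X i => x i]
        refine prod_congr rfl fun a _ => prod_congr rfl fun x hx => ?_
        rw [(mem_filter.1 hx).2]
    _ = ∏ a, (w i a ^ w i a) ^ ∏ j ∈ univ.erase i, ∑ b, w j b := by
        refine prod_congr rfl fun a _ => ?_
        rw [prod_pow_eq_pow_sum, sum_filter_apply_eq_prod (fun i => w i), pow_mul]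

theorem prod_prod_pi_pow_self (w : ∀ i, X i → Y i → ℕ) :
    ∏ r : ∀ i, X i, ∏ s : ∀ i, Y i, (∏ i, w i (r i) (s i)) ^ ∏ i, w i (r i) (s i) =
      ∏ i, (∏ x, ∏ y, w i x y ^ w i x y) ^ ∏ j ∈ univ.erase i, ∑ x, ∑ y, w j x y := by
  simp only [← Fintype.prod_prod_type', ← Fintype.sum_prod_type']
  rw [← prod_pi_pow_self fun i (x : X i × Y i) => w i x.1 x.2]
  exact (Equiv.prod_comp (arrowProdEquivProdArrow ι X Y) _).symm

end ProductWeights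

section NoCommonZero

variable {ι : Type*} {X : ι → Type*} [∀ i, Zero (X i)]

/-- The families `r` and `s` do not vanish at a common index. With `r` and `s` the residues of
`a` and `b` modulo pairwise coprime `m i`, this says that no `m i` divides both `a` and `b`. -/
def NoCommonZero (r s : ∀ i, X i) : Prop := ∀ i, ¬(r i = 0 ∧ s i = 0)

variable [Fintype ι] [∀ i, DecidableEq (X i)]

instance : DecidableRel (NoCommonZero (X := X)) := fun r s =>
  inferInstanceAs (Decidable (∀ i, ¬(r i = 0 ∧ s i = 0)))

theorem sum_noCommonZero_prod {S : Type*} [CommSemiring S] [∀ i, Fintype (X i)] [DecidableEq ι]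
    (r : ∀ i, X i) (f : ∀ i, X i → S) :
    ∑ s with NoCommonZero r s, ∏ i, f i (s i) = ∏ i, ∑ b with ¬(r i = 0 ∧ b = 0), f i b := by
  rw [prod_univ_sum]
  congr 1
  ext s
  simp [NoCommonZero]

end NoCommonZero

section Residues

theorem card_filter_natCast_succ_eq (n : ℕ) {M : ℕ} [NeZero M] (r : ZMod M) :
    #{ℓ : Fin n | ((ℓ.1 + 1 : ℕ) : ZMod M) = r} =
      n / M + if (r - 1).val < n % M then 1 else 0 := by
  have count_eq := Nat.count_modEq_card n (NeZero.pos M) (r - 1).val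
  rw [Nat.mod_eq_of_lt (r - 1).val_lt] at count_eq
  rw [← count_eq, Nat.count_eq_card_filter_range, card_filter, card_filter,
    ← Fin.sum_univ_eq_sum_range fun ℓ => if ℓ ≡ (r - 1).val [MOD M] then 1 else 0]
  refine sum_congr rfl fun ℓ _ => if_congr ?_ rfl rfl
  rw [← ZMod.natCast_eq_natCast_iff, ZMod.natCast_zmod_val, eq_sub_iff_add_eq, Nat.cast_succ]

variable {ι : Type*} (m : ι → ℕ)

/-- The residues modulo all `m i` of the element `ℓ + 1` of `{1, …, n}` that `ℓ : Fin n` encodes;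
this is the coloring to which the counting lemmas are applied. -/
def residueVec (n : ℕ) (ℓ : Fin n) : ∀ i, ZMod (m i) := fun _ => (ℓ.1 + 1 : ℕ)

theorem card_residueVec_apply_eq_zero (n : ℕ) (i : ι) :
    #{ℓ | residueVec m n ℓ i = 0} = n / m i := by
  rw [← Nat.card_multiples n (m i), card_filter, card_filter,
    ← Fin.sum_univ_eq_sum_range fun ℓ => if m i ∣ ℓ + 1 then 1 else 0]
  simp only [residueVec, ZMod.natCast_eq_zero_iff]

variable [Fintype ι]

theorem prod_prod_residueVec_ite {S : Type*} [CommMonoid S] (n : ℕ) (x y : ι → S) :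
    ∏ ℓ, ∏ i, (if residueVec m n ℓ i = 0 then x i else y i) =
      ∏ i, x i ^ (n / m i) * y i ^ (n - n / m i) := by
  rw [prod_comm]
  refine prod_congr rfl fun i _ => ?_
  rw [prod_ite, prod_const, prod_const, ← compl_filter, card_compl, card_residueVec_apply_eq_zero,
    Fintype.card_fin]

variable {m} [∀ i, NeZero (m i)]

theorem card_zmod_pi [DecidableEq ι] : Fintype.card (∀ i, ZMod (m i)) = ∏ i, m i := by
  simp only [Fintype.card_pi, ZMod.card]

theorem card_residueVec_eq (hm : Pairwise (Function.onFun Nat.Coprime m)) (n : ℕ)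
    (r : ∀ i, ZMod (m i)) :
    #{ℓ | residueVec m n ℓ = r} = n / ∏ i, m i +
      if ((ZMod.prodEquivPi m hm).symm r - 1).val < n % ∏ i, m i then 1 else 0 := by
  have : NeZero (∏ i, m i) := ⟨prod_ne_zero_iff.2 fun i _ => NeZero.ne (m i)⟩
  rw [← card_filter_natCast_succ_eq]
  congr! with ℓ
  rw [RingEquiv.eq_symm_apply, map_natCast]
  rfl

theorem card_residueVec_eq_le (hm : Pairwise (Function.onFun Nat.Coprime m)) (n : ℕ)
    (r : ∀ i, ZMod (m i)) : #{ℓ | residueVec m n ℓ = r} ≤ n / ∏ i, m i + 1 := by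
  rw [card_residueVec_eq hm]
  split_ifs <;> simp

theorem card_residueVec_eq_of_mul (hm : Pairwise (Function.onFun Nat.Coprime m)) (n : ℕ)
    (r : ∀ i, ZMod (m i)) : #{ℓ | residueVec m ((∏ i, m i) * n) ℓ = r} = n := by
  rw [card_residueVec_eq hm, Nat.mul_mod_right, if_neg (Nat.not_lt_zero _), add_zero,
    Nat.mul_div_cancel_left _ (prod_pos fun i _ => NeZero.pos (m i))]

end Residues

@[to_additive]
theorem prod_eq_mul_pow_of_forall_ne {α S : Type*} [Fintype α] [CommMonoid S]
    {f : α → S} {a : α} {b : S} (h : ∀ x ≠ a, f x = b) :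
    ∏ x, f x = f a * b ^ (Fintype.card α - 1) := by
  classical
  rw [← mul_prod_erase _ _ (mem_univ a), prod_congr rfl fun x hx => h x (ne_of_mem_erase hx),
    prod_const, card_erase_of_mem (mem_univ a), card_univ]

section PairWeight

variable {M : ℕ}

/-- The optimal coupling of the residues modulo `M` of `ℓ` and `σ ℓ`, scaled to an integer: pairs
of nonzero residues are equally likely, and so are the pairs with exactly one zero. -/
def pairWeight (x y : ZMod M) : ℕ :=
  if x = 0 ∧ y = 0 then 0 else if x = 0 ∨ y = 0 then M - 1 else M - 2

theorem pairWeight_comm (x y : ZMod M) : pairWeight x y = pairWeight y x := by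
  simp only [pairWeight, and_comm, or_comm]

variable [NeZero M]

theorem sum_pairWeight (x : ZMod M) : ∑ y, pairWeight x y = (M - 1) ^ 2 := by
  by_cases hx : x = 0
  · have off_zero (y : ZMod M) (hy : y ≠ 0) : pairWeight x y = M - 1 := by simp [pairWeight, hx, hy]
    rw [sum_eq_add_nsmul_of_forall_ne off_zero, ZMod.card]
    simp [pairWeight, hx, sq]
  · have off_zero (y : ZMod M) (hy : y ≠ 0) : pairWeight x y = M - 2 := by simp [pairWeight, hx, hy]
    rw [sum_eq_add_nsmul_of_forall_ne off_zero, ZMod.card]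
    have : M - 1 = 0 ∨ M - 1 = M - 2 + 1 := by omega
    rcases this with h | h
    · simp [pairWeight, h]
    · simp [pairWeight, hx, h]
      ring

theorem sum_prod_pairWeight {ι : Type*} [Fintype ι] [DecidableEq ι] {m : ι → ℕ}
    [∀ i, NeZero (m i)] (r : ∀ i, ZMod (m i)) :
    ∑ s : ∀ i, ZMod (m i), ∏ i, pairWeight (r i) (s i) = ∏ i, (m i - 1) ^ 2 := by
  rw [← Fintype.prod_sum]
  simp only [sum_pairWeight]

theorem prod_prod_pairWeight_pow_self :
    ∏ x : ZMod M, ∏ y : ZMod M, pairWeight x y ^ pairWeight x y =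
      (M - 1) ^ (2 * (M - 1) ^ 2) * (M - 2) ^ ((M - 2) * (M - 1) ^ 2) := by
  have row_zero : ∏ y : ZMod M, pairWeight 0 y ^ pairWeight 0 y = (M - 1) ^ (M - 1) ^ 2 := by
    have off_zero (y : ZMod M) (hy : y ≠ 0) :
        pairWeight 0 y ^ pairWeight 0 y = (M - 1) ^ (M - 1) := by simp [pairWeight, hy]
    rw [prod_eq_mul_pow_of_forall_ne off_zero, ZMod.card, ← pow_mul, ← sq]
    simp [pairWeight]
  have row_ne_zero (x : ZMod M) (hx : x ≠ 0) : ∏ y : ZMod M, pairWeight x y ^ pairWeight x y =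
      (M - 1) ^ (M - 1) * (M - 2) ^ ((M - 2) * (M - 1)) := by
    have off_zero (y : ZMod M) (hy : y ≠ 0) :
        pairWeight x y ^ pairWeight x y = (M - 2) ^ (M - 2) := by simp [pairWeight, hx, hy]
    rw [prod_eq_mul_pow_of_forall_ne off_zero, ZMod.card, ← pow_mul]
    simp [pairWeight, hx]
  rw [prod_eq_mul_pow_of_forall_ne row_ne_zero, row_zero, ZMod.card]
  ring

end PairWeight

section GrowthFactor

/-- The factor `(m - 1) ^ (2 * (1 - 1 / m)) / (m * (m - 2) ^ (1 - 2 / m))` that the modulus `m`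
contributes to the growth rate; for `m = 2` it is `1 / 2`, since `0 ^ 0 = 1` for real powers. -/
noncomputable def growthFactor (m : ℕ) : ℝ :=
  ((m : ℝ) - 1) ^ (2 * (1 - 1 / (m : ℝ))) / ((m : ℝ) * ((m : ℝ) - 2) ^ (1 - 2 / (m : ℝ)))

variable {m : ℕ}

theorem rpow_sub_two_pos (hm : 2 ≤ m) : 0 < ((m : ℝ) - 2) ^ (1 - 2 / (m : ℝ)) := by
  rcases hm.eq_or_lt with rfl | h
  · norm_num
  · exact rpow_pos_of_pos (sub_pos.2 (by exact_mod_cast h)) _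

theorem growthFactor_pos (hm : 2 ≤ m) : 0 < growthFactor m := by
  have one_lt : (1 : ℝ) < m := by exact_mod_cast hm
  exact div_pos (rpow_pos_of_pos (sub_pos.2 one_lt) _)
    (mul_pos (one_pos.trans one_lt) (rpow_sub_two_pos hm))

theorem growthFactor_mul_self_pow_mul (hm : 2 ≤ m) (n : ℕ) :
    (growthFactor m * m) ^ n * ((m : ℝ) - 2) ^ (n - 2 * (n / m) : ℝ) =
      ((m : ℝ) - 1) ^ (2 * (n - n / m) : ℝ) := by
  have two_le : (2 : ℝ) ≤ m := by exact_mod_cast hm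
  have rpow_ne_zero := (rpow_sub_two_pos hm).ne'
  rw [show (n - 2 * (n / m) : ℝ) = (1 - 2 / m) * n by ring,
    show (2 * (n - n / m) : ℝ) = 2 * (1 - 1 / m) * n by ring,
    rpow_mul_natCast (by linarith), rpow_mul_natCast (by linarith), ← mul_pow, growthFactor,
    mul_assoc, div_mul_cancel₀ _ (mul_ne_zero (by linarith) rpow_ne_zero)]

theorem growthFactor_pow_mul_prod_pairWeight [NeZero m] (hm : 2 ≤ m) :
    (growthFactor m * m) ^ (m * (m - 1) ^ 2) *
        (∏ x : ZMod m, ∏ y : ZMod m, pairWeight x y ^ pairWeight x y : ℕ) =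
      (((m - 1) ^ 2 : ℕ) : ℝ) ^ (m * (m - 1) ^ 2) := by
  have pow_mul_rpow := growthFactor_mul_self_pow_mul hm (m * (m - 1) ^ 2)
  obtain ⟨b, rfl⟩ := Nat.exists_eq_add_of_le' hm
  have left_exponent : (((b + 2) * (b + 1) ^ 2 : ℕ) -
      2 * (((b + 2) * (b + 1) ^ 2 : ℕ) / (b + 2 : ℕ)) : ℝ) = (b * (b + 1) ^ 2 : ℕ) := by
    push_cast
    field_simp
    ring
  have right_exponent : (2 * (((b + 2) * (b + 1) ^ 2 : ℕ) -
      ((b + 2) * (b + 1) ^ 2 : ℕ) / (b + 2 : ℕ)) : ℝ) = (2 * (b + 1) ^ 3 : ℕ) := by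
    push_cast
    field_simp
    ring
  simp only [show b + 2 - 1 = b + 1 from rfl, left_exponent, right_exponent, rpow_natCast]
    at pow_mul_rpow
  rw [prod_prod_pairWeight_pow_self]
  push_cast [show b + 2 - 1 = b + 1 from rfl, Nat.add_sub_cancel] at pow_mul_rpow ⊢
  rw [add_sub_cancel_right, show (b + 2 - 1 : ℝ) = b + 1 by ring] at pow_mul_rpow
  rw [mul_left_comm, pow_mul_rpow, ← pow_mul]
  ring

theorem prod_growthFactor_pow_mul_prod_pairWeight {ι : Type*} [Fintype ι] [DecidableEq ι]
    {m : ι → ℕ} [∀ i, NeZero (m i)] (hm : ∀ i, 2 ≤ m i) :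
    ((∏ i, growthFactor (m i)) * (∏ i, m i : ℕ)) ^ ((∏ i, m i) * ∏ i, (m i - 1) ^ 2) *
        (∏ r : ∀ i, ZMod (m i), ∏ s : ∀ i, ZMod (m i),
          (∏ i, pairWeight (r i) (s i)) ^ ∏ i, pairWeight (r i) (s i) : ℕ) =
      ((∏ i, (m i - 1) ^ 2 : ℕ) : ℝ) ^ ((∏ i, m i) * ∏ i, (m i - 1) ^ 2) := by
  have exponent_eq (i : ι) : (∏ i, m i) * ∏ i, (m i - 1) ^ 2 =
      m i * (m i - 1) ^ 2 * ∏ j ∈ univ.erase i, m j * (m j - 1) ^ 2 := by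
    rw [← prod_mul_distrib, mul_prod_erase _ (fun j => m j * (m j - 1) ^ 2) (mem_univ i)]
  rw [prod_prod_pi_pow_self fun i (x y : ZMod (m i)) => pairWeight x y]
  simp only [sum_pairWeight, sum_const, card_univ, ZMod.card, smul_eq_mul]
  rw [Nat.cast_prod m univ, ← prod_mul_distrib, Nat.cast_prod, Nat.cast_prod, ← prod_pow,
    ← prod_pow, ← prod_mul_distrib]
  refine prod_congr rfl fun i _ => ?_
  rw [exponent_eq i, Nat.cast_pow, pow_mul, ← mul_pow,
    growthFactor_pow_mul_prod_pairWeight (hm i), ← pow_mul]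

end GrowthFactor

section Weights

variable {m n : ℕ}

theorem add_one_div_pow_le {a : ℝ} (ha : 1 ≤ a) {k : ℕ} (hk : k ≤ n) :
    (a + 1 / n) ^ k ≤ exp 1 * a ^ k := by
  have base_le : a + 1 / n ≤ exp (1 / n) * a := by
    have := add_one_le_exp (1 / n : ℝ)
    have : (0 : ℝ) ≤ 1 / n := by positivity
    nlinarith
  calc (a + 1 / n) ^ k ≤ (exp (1 / n) * a) ^ k := by gcongr
    _ = exp (k * (1 / n)) * a ^ k := by rw [mul_pow, exp_nat_mul]
    _ ≤ exp 1 * a ^ k := by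
        gcongr
        rw [mul_one_div]
        exact div_le_one_of_le₀ (by exact_mod_cast hk) n.cast_nonneg

theorem natCast_div_le_natCast_div_add_one : (n / m : ℝ) ≤ (n / m : ℕ) + 1 := by
  rw [← Nat.floor_div_eq_div (K := ℝ)]
  exact (Nat.lt_floor_add_one _).le

theorem two_mul_div_le (hm : 2 ≤ m) : 2 * (n / m) ≤ n :=
  (Nat.mul_le_mul_right _ hm).trans (Nat.mul_div_le n m)

theorem rpow_sub_two_le (hm : 2 ≤ m) (hn : 0 < n) :
    ((m : ℝ) - 2) ^ (n - 2 * (n / m) : ℝ) ≤ n * ((m : ℝ) - 2 + 1 / n) ^ (n - 2 * (n / m)) := by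
  have one_le_n : (1 : ℝ) ≤ n := by exact_mod_cast hn
  have inv_pos : (0 : ℝ) < 1 / n := by positivity
  rcases hm.eq_or_lt with rfl | hm
  · have : n - 2 * (n / 2) = 0 ∨ n - 2 * (n / 2) = 1 := by omega
    rcases this with h | h
    · simpa [h, mul_div_cancel₀] using one_le_n
    · simp [h, mul_div_cancel₀, hn.ne']
  · have one_le : (1 : ℝ) ≤ m - 2 := by
      have : (3 : ℝ) ≤ m := by exact_mod_cast hm
      linarith
    have exponent_le : (n - 2 * (n / m) : ℝ) ≤ (n - 2 * (n / m) : ℕ) := by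
      have : ((n / m : ℕ) : ℝ) ≤ n / m := Nat.cast_div_le
      push_cast [Nat.cast_sub (two_mul_div_le hm.le)]
      linarith
    calc ((m : ℝ) - 2) ^ (n - 2 * (n / m) : ℝ)
        ≤ ((m : ℝ) - 2) ^ ((n - 2 * (n / m) : ℕ) : ℝ) :=
          rpow_le_rpow_of_exponent_le one_le exponent_le
      _ ≤ 1 * ((m : ℝ) - 2 + 1 / n) ^ (n - 2 * (n / m)) := by
          rw [rpow_natCast, one_mul]
          gcongr
          linarith
      _ ≤ n * ((m : ℝ) - 2 + 1 / n) ^ (n - 2 * (n / m)) := by gcongr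

theorem sub_one_pow_le (hm : 2 ≤ m) :
    ((m : ℝ) - 1) ^ (2 * (n - n / m)) ≤
      ((m : ℝ) - 1) ^ 2 * ((m : ℝ) - 1) ^ (2 * (n - n / m : ℝ)) := by
  have one_le : (1 : ℝ) ≤ m - 1 := by
    have : (2 : ℝ) ≤ m := by exact_mod_cast hm
    linarith
  rw [← rpow_natCast, ← rpow_natCast _ 2, ← rpow_add (by linarith)]
  refine rpow_le_rpow_of_exponent_le one_le ?_
  have := natCast_div_le_natCast_div_add_one (m := m) (n := n)
  push_cast [Nat.cast_sub (Nat.div_le_self n m)]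
  linarith

-- The optimal weight is `(m - 2) / (m - 1)`; the summand `1 / n` keeps it positive for `m = 2`.
theorem exists_weight (hm : 2 ≤ m) (hn : 0 < n) :
    ∃ w : ℝ, 0 < w ∧ ((m - 1) * w) ^ (n / m) * (1 + (m - 1) * w) ^ (n - n / m) ≤
      exp 1 * (m - 1) ^ 2 * n * (growthFactor m * m) ^ n * w ^ (n - n / m) := by
  have two_le : (2 : ℝ) ≤ m := by exact_mod_cast hm
  have inv_pos : (0 : ℝ) < 1 / n := by positivity
  obtain ⟨a, ha⟩ : ∃ a : ℝ, a = m - 1 := ⟨_, rfl⟩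
  obtain ⟨v, hv⟩ : ∃ v : ℝ, v = m - 2 + 1 / n := ⟨_, rfl⟩
  obtain ⟨G, hG⟩ : ∃ G, G = (growthFactor m * m) ^ n := ⟨_, rfl⟩
  have one_le_a : 1 ≤ a := by linarith
  have v_pos : 0 < v := by linarith
  have G_nonneg : 0 ≤ G := hG ▸ pow_nonneg (mul_nonneg (growthFactor_pos hm).le m.cast_nonneg) n
  have pow_le : a ^ (2 * (n - n / m)) ≤ a ^ 2 * (G * (n * v ^ (n - 2 * (n / m)))) := by
    rw [ha]
    refine (sub_one_pow_le hm).trans ?_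
    rw [← growthFactor_mul_self_pow_mul hm, ← hG, hv]
    gcongr
    exact rpow_sub_two_le hm hn
  refine ⟨v / a, by positivity, ?_⟩
  rw [← ha, ← hG, mul_div_cancel₀ _ (by positivity), show 1 + v = a + 1 / n by linarith, div_pow,
    mul_div_assoc', le_div_iff₀ (by positivity)]
  calc v ^ (n / m) * (a + 1 / n) ^ (n - n / m) * a ^ (n - n / m)
      ≤ v ^ (n / m) * (exp 1 * a ^ (n - n / m)) * a ^ (n - n / m) := by
        gcongr
        exact add_one_div_pow_le one_le_a (Nat.sub_le _ _)
    _ = exp 1 * v ^ (n / m) * a ^ (2 * (n - n / m)) := by ring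
    _ ≤ exp 1 * v ^ (n / m) * (a ^ 2 * (G * (n * v ^ (n - 2 * (n / m))))) := by gcongr
    _ = exp 1 * a ^ 2 * n * G * v ^ (n / m + (n - 2 * (n / m))) := by ring
    _ = exp 1 * a ^ 2 * n * G * v ^ (n - n / m) := by
        have := two_mul_div_le (n := n) hm
        congr 2
        omega

end Weights

theorem sum_filter_not_and_ite {M : ℕ} [NeZero M] (x : ZMod M) (w : ℝ) :
    ∑ y : ZMod M with ¬(x = 0 ∧ y = 0), (if y = 0 then 1 else w) =
      if x = 0 then (M - 1) * w else 1 + (M - 1) * w := by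
  have off_zero (y : ZMod M) (hy : y ≠ 0) :
      (if ¬(x = 0 ∧ y = 0) then if y = 0 then 1 else w else 0) = w := by simp [hy]
  rw [sum_filter, sum_eq_add_nsmul_of_forall_ne off_zero, ZMod.card, nsmul_eq_mul,
    Nat.cast_pred (NeZero.pos M)]
  by_cases hx : x = 0 <;> simp [hx]

theorem pow_add_le_pow_mul_max_one_pow {x : ℝ} (hx : 0 ≤ x) (a : ℕ) {b T : ℕ} (h : b ≤ T) :
    x ^ (a + b) ≤ x ^ a * max 1 x ^ T := by
  rw [pow_add]
  gcongr
  exact (pow_le_pow_left₀ hx (le_max_right 1 x) b).trans (pow_le_pow_right₀ (le_max_left 1 x) h)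

theorem exists_mul_pow_le_exp_mul_log (c : ℝ) (N : ℕ) :
    ∃ K₀, ∀ K, K₀ ≤ K → ∀ n : ℕ, 2 ≤ n → c * (n + 1) ^ N ≤ exp (K * log n) := by
  have log_two_pos : 0 < log 2 := log_pos one_lt_two
  refine ⟨|c| / log 2 + 2 * N, fun K hK n hn => ?_⟩
  have two_le : (2 : ℝ) ≤ n := by exact_mod_cast hn
  have c_le : c ≤ exp (|c| / log 2 * log n) := by
    have : |c| ≤ |c| / log 2 * log n := by
      rw [div_mul_eq_mul_div, le_div_iff₀ log_two_pos]
      gcongr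
    linarith [add_one_le_exp (|c| / log 2 * log n), le_abs_self c]
  have pow_le : ((n : ℝ) + 1) ^ N ≤ exp (2 * N * log n) := by
    rw [show 2 * N * log n = (2 * N : ℕ) * log n by push_cast; ring, exp_nat_mul,
      exp_log (by linarith), pow_mul]
    gcongr
    nlinarith
  calc c * (n + 1) ^ N ≤ exp (|c| / log 2 * log n) * exp (2 * N * log n) := by gcongr
    _ = exp ((|c| / log 2 + 2 * N) * log n) := by
        rw [← exp_add]
        ring_nf
    _ ≤ exp (K * log n) := by
        gcongr

section Counting

variable {ι : Type*} (m : ι → ℕ)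

/-- No `m i` divides both `a` and `b`. For the primes `m i ≤ k` this is `gcd(a, b, k!) = 1`. -/
def NoCommonDivisor (a b : ℕ) : Prop := ∀ i, ¬(m i ∣ a ∧ m i ∣ b)

/-- The number of permutations `σ` of `{1, …, n}` such that no `m i` divides both `ℓ` and `σ ℓ`,
for any `ℓ`. As in `kCoprimePermCount`, `ℓ : Fin n` stands for the integer `ℓ + 1`. -/
noncomputable def noCommonDivisorPermCount (n : ℕ) : ℕ :=
  Nat.card {σ : Perm (Fin n) // ∀ ℓ, NoCommonDivisor m (ℓ.1 + 1) ((σ ℓ).1 + 1)}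

theorem noCommonZero_residueVec_iff {n : ℕ} {ℓ ℓ' : Fin n} :
    NoCommonZero (residueVec m n ℓ) (residueVec m n ℓ') ↔
      NoCommonDivisor m (ℓ.1 + 1) (ℓ'.1 + 1) := by
  simp only [NoCommonZero, NoCommonDivisor, residueVec, ZMod.natCast_eq_zero_iff]

variable {m}

theorem noCommonDivisorPermCount_le_add {a b : ℕ} (τ : Perm (Fin b))
    (hτ : ∀ j : Fin b, NoCommonDivisor m (a + j.1 + 1) (a + (τ j).1 + 1)) :
    noCommonDivisorPermCount m a ≤ noCommonDivisorPermCount m (a + b) := by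
  refine Nat.card_le_card_of_injective
    (fun σ => ⟨finSumFinEquiv.permCongr (Perm.sumCongr σ.1 τ), fun ℓ => ?_⟩) fun σ σ' h => ?_
  · obtain ⟨x | x, rfl⟩ := finSumFinEquiv.surjective ℓ
    · simpa [permCongr_apply] using σ.2 x
    · simpa [permCongr_apply] using hτ x
  · have sumCongr_eq := finSumFinEquiv.permCongr.injective (Subtype.ext_iff.1 h)
    exact Subtype.ext (Prod.ext_iff.1
      (Perm.sumCongrHom_injective (a₁ := (σ.1, τ)) (a₂ := (σ'.1, τ)) sumCongr_eq)).1

theorem noCommonDivisor_succ (hm : ∀ i, m i ≠ 1) (a : ℕ) : NoCommonDivisor m a (a + 1) :=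
  fun i h => hm i (Nat.dvd_one.1 ((Nat.dvd_add_right h.1).1 h.2))

theorem noCommonDivisorPermCount_le_add_two (hm : ∀ i, m i ≠ 1) (a : ℕ) :
    noCommonDivisorPermCount m a ≤ noCommonDivisorPermCount m (a + 2) :=
  noCommonDivisorPermCount_le_add (swap 0 1) fun j => by
    fin_cases j
    · exact noCommonDivisor_succ hm (a + 1)
    · exact fun i h => noCommonDivisor_succ hm (a + 1) i h.symm

theorem noCommonDivisorPermCount_le_add_of_dvd (hm : ∀ i, m i ≠ 1) {a : ℕ} (ha : ∀ i, m i ∣ a)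
    (b : ℕ) : noCommonDivisorPermCount m a ≤ noCommonDivisorPermCount m (a + b) := by
  induction b using Nat.twoStepInduction with
  | zero => rfl
  | one => exact noCommonDivisorPermCount_le_add 1 fun j i h =>
      noCommonDivisor_succ hm a i ⟨ha i, by simpa using h.1⟩
  | more b ih _ => exact ih.trans (noCommonDivisorPermCount_le_add_two hm (a + b))

variable [Fintype ι]

theorem noCommonDivisorPermCount_mul_prod_pow_le [∀ i, NeZero (m i)]
    (hcop : Pairwise (Function.onFun Nat.Coprime m)) (n : ℕ) {w : ι → ℝ} (hw : ∀ i, 0 ≤ w i) :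
    noCommonDivisorPermCount m n * ∏ i, w i ^ (n - n / m i) ≤
      ((n / ∏ i, m i) + 1)! ^ (∏ i, m i) *
        ∏ i, ((m i - 1) * w i) ^ (n / m i) * (1 + (m i - 1) * w i) ^ (n - n / m i) := by
  classical
  have expansion := card_perm_mul_prod_le (residueVec m n) NoCommonZero
    (y := fun s => ∏ i, if s i = 0 then 1 else w i)
    fun s => prod_nonneg fun i _ => by split_ifs <;> [exact zero_le_one; exact hw i]
  simp only [noCommonZero_residueVec_iff,
    sum_noCommonZero_prod _ fun i (y : ZMod (m i)) => if y = 0 then 1 else w i,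
    sum_filter_not_and_ite, prod_prod_residueVec_ite, one_pow, one_mul] at expansion
  refine expansion.trans (mul_le_mul_of_nonneg_right ?_ (prod_nonneg fun i _ => ?_))
  · have classes_le := prod_le_pow_card univ (fun r => (#{ℓ | residueVec m n ℓ = r})!) _
      fun r _ => Nat.factorial_le (card_residueVec_eq_le hcop n r)
    rw [card_univ, card_zmod_pi] at classes_le
    exact_mod_cast classes_le
  · have : (1 : ℝ) ≤ m i := by exact_mod_cast NeZero.one_le
    have := mul_nonneg (sub_nonneg.2 this) (hw i)
    positivity

theorem exists_noCommonDivisorPermCount_le (hcop : Pairwise (Function.onFun Nat.Coprime m))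
    (hm : ∀ i, 2 ≤ m i) : ∃ (c : ℝ) (N : ℕ), ∀ n, 0 < n → (noCommonDivisorPermCount m n : ℝ) ≤
      n ! * (∏ i, growthFactor (m i)) ^ n * (c * (n + 1) ^ N) := by
  have (i : ι) : NeZero (m i) := ⟨(two_pos.trans_le (hm i)).ne'⟩
  set P := ∏ i, m i with hP
  set F := ∏ i, growthFactor (m i) with hF
  have F_nonneg : 0 ≤ F := prod_nonneg fun i _ => (growthFactor_pos (hm i)).le
  set c := ∏ i, exp 1 * ((m i : ℝ) - 1) ^ 2 with hc
  have : 0 ≤ c := prod_nonneg fun i _ => by positivity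
  refine ⟨P ^ P * c, 2 * P + Fintype.card ι, fun n hn => ?_⟩
  choose w w_pos hw using fun i => exists_weight (hm i) hn
  have W_pos : 0 < ∏ i, w i ^ (n - n / m i) := prod_pos fun i _ => pow_pos (w_pos i) _
  set W := ∏ i, w i ^ (n - n / m i) with hW
  have classes_le : ((n / P + 1)! ^ P * P ^ n : ℝ) ≤ n ! * ((n + 1) ^ (2 * P) * P ^ P) := by
    exact_mod_cast factorial_div_add_one_pow_mul_le n (prod_pos fun i _ => NeZero.pos (m i))
  have prod_le : ∏ i, ((m i - 1) * w i) ^ (n / m i) * (1 + (m i - 1) * w i) ^ (n - n / m i) ≤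
      c * n ^ Fintype.card ι * (F * P) ^ n * W := by
    rw [hc, hF, hP, hW, Nat.cast_prod, ← prod_mul_distrib, ← card_univ, ← prod_const, ← prod_pow,
      ← prod_mul_distrib, ← prod_mul_distrib, ← prod_mul_distrib]
    refine prod_le_prod (fun i _ => ?_) fun i _ => hw i
    have : (2 : ℝ) ≤ m i := by exact_mod_cast hm i
    have := mul_pos (show (0 : ℝ) < m i - 1 by linarith) (w_pos i)
    positivity
  refine le_of_mul_le_mul_right ?_ W_pos
  calc noCommonDivisorPermCount m n * W
      ≤ (n / P + 1)! ^ P * (c * n ^ Fintype.card ι * (F * P) ^ n * W) :=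
        (noCommonDivisorPermCount_mul_prod_pow_le hcop n fun i => (w_pos i).le).trans (by gcongr)
    _ = (n / P + 1)! ^ P * P ^ n * (c * n ^ Fintype.card ι * F ^ n * W) := by ring
    _ ≤ n ! * ((n + 1) ^ (2 * P) * P ^ P) * (c * (n + 1) ^ Fintype.card ι * F ^ n * W) := by
        gcongr
        exact le_add_of_nonneg_right zero_le_one
    _ = n ! * F ^ n * (P ^ P * c * (n + 1) ^ (2 * P + Fintype.card ι)) * W := by ring

theorem factorial_mul_pow_le_noCommonDivisorPermCount_mul
    (hcop : Pairwise (Function.onFun Nat.Coprime m)) (hm : ∀ i, 2 ≤ m i) {P D : ℕ}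
    (hP : P = ∏ i, m i) (hD : D = ∏ i, (m i - 1) ^ 2) (t : ℕ) :
    ((P * (t * D))! : ℝ) * (∏ i, growthFactor (m i)) ^ (P * (t * D)) ≤
      noCommonDivisorPermCount m (P * (t * D)) * (t * D + 1) ^ (2 * P * D) := by
  classical
  have (i : ι) : NeZero (m i) := ⟨(two_pos.trans_le (hm i)).ne'⟩
  set C := noCommonDivisorPermCount m (P * (t * D))
  set F := ∏ i, growthFactor (m i)
  obtain ⟨V, hV⟩ : ∃ V, V = ∏ r : ∀ i, ZMod (m i), ∏ s : ∀ i, ZMod (m i),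
      (∏ i, pairWeight (r i) (s i)) ^ ∏ i, pairWeight (r i) (s i) := ⟨_, rfl⟩
  have counting := factorial_card_mul_pow_le_card_perm_mul
    (c := residueVec m (P * (t * D))) (R := NoCommonZero) (D := D) (t := t)
    (w := fun r s => ∏ i, pairWeight (r i) (s i))
    (fun s => hP ▸ card_residueVec_eq_of_mul hcop (t * D) s)
    (fun r => (sum_prod_pairWeight r).trans hD.symm)
    (fun s => by simpa only [pairWeight_comm, hD] using sum_prod_pairWeight s)
    fun r s h i hi => h (prod_eq_zero (mem_univ i) (by simp [pairWeight, hi]))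
  simp only [noCommonZero_residueVec_iff, Fintype.card_fin, card_zmod_pi, ← hP, ← hV] at counting
  have optimality : (F * P) ^ (P * D) * V = (D : ℝ) ^ (P * D) := by
    rw [hV, hD, hP]
    exact prod_growthFactor_pow_mul_prod_pairWeight hm
  have PV_pos : (0 : ℝ) < P ^ (P * (t * D)) * V ^ t := by
    have P_pos : 0 < P := hP ▸ prod_pos fun i _ => NeZero.pos (m i)
    have V_pos : 0 < V := hV ▸ prod_pos fun r _ => prod_pos fun s _ => Nat.pow_self_pos
    positivity
  refine le_of_mul_le_mul_right ?_ PV_pos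
  calc (P * (t * D))! * F ^ (P * (t * D)) * (P ^ (P * (t * D)) * V ^ t)
      = (P * (t * D))! * ((F * P) ^ (P * D) * V) ^ t := by ring
    _ = (P * (t * D))! * D ^ (P * (t * D)) := by
        rw [optimality]
        ring
    _ ≤ C * (P ^ (P * (t * D)) * V ^ t * (t * D + 1) ^ (2 * P * D)) := by exact_mod_cast counting
    _ = C * (t * D + 1) ^ (2 * P * D) * (P ^ (P * (t * D)) * V ^ t) := by ring

theorem exists_le_noCommonDivisorPermCount_mul (hcop : Pairwise (Function.onFun Nat.Coprime m))
    (hm : ∀ i, 2 ≤ m i) : ∃ (c : ℝ) (N : ℕ), ∀ n, n ! * (∏ i, growthFactor (m i)) ^ n ≤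
      (noCommonDivisorPermCount m n : ℝ) * (c * (n + 1) ^ N) := by
  obtain ⟨P, hP⟩ : ∃ P, P = ∏ i, m i := ⟨_, rfl⟩
  obtain ⟨D, hD⟩ : ∃ D, D = ∏ i, (m i - 1) ^ 2 := ⟨_, rfl⟩
  set F := ∏ i, growthFactor (m i)
  have F_nonneg : 0 ≤ F := prod_nonneg fun i _ => (growthFactor_pos (hm i)).le
  have P_pos : 0 < P := hP ▸ prod_pos fun i _ => two_pos.trans_le (hm i)
  have D_pos : 0 < D := hD ▸ prod_pos fun i _ => pow_pos (Nat.sub_pos_of_lt (hm i)) 2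
  refine ⟨max 1 F ^ (P * D), 2 * P * D + P * D, fun n => ?_⟩
  obtain ⟨t, j, j_le, hn⟩ : ∃ t j, j ≤ P * D ∧ n = P * (t * D) + j :=
    ⟨n / (P * D), n % (P * D), (Nat.mod_lt n (mul_pos P_pos D_pos)).le, by
      rw [mul_left_comm, Nat.div_add_mod']⟩
  have tD_le : (t * D : ℝ) ≤ n := by
    rw [hn]
    exact_mod_cast (Nat.le_mul_of_pos_left _ P_pos).trans (Nat.le_add_right _ _)
  have count_le : noCommonDivisorPermCount m (P * (t * D)) ≤ noCommonDivisorPermCount m n :=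
    hn ▸ noCommonDivisorPermCount_le_add_of_dvd (fun i => (one_lt_two.trans_le (hm i)).ne')
      (fun i => (hP ▸ dvd_prod_of_mem m (mem_univ i)).mul_right _) j
  have factorial_le : (n ! : ℝ) ≤ (P * (t * D))! * (n + 1) ^ (P * D) := by
    rw [hn]
    exact_mod_cast factorial_add_le _ j_le
  calc n ! * F ^ n
      ≤ (P * (t * D))! * (n + 1) ^ (P * D) * (F ^ (P * (t * D)) * max 1 F ^ (P * D)) := by
        gcongr
        exact hn ▸ pow_add_le_pow_mul_max_one_pow F_nonneg _ j_le
    _ = (P * (t * D))! * F ^ (P * (t * D)) * ((n + 1) ^ (P * D) * max 1 F ^ (P * D)) := by ring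
    _ ≤ noCommonDivisorPermCount m (P * (t * D)) * (t * D + 1) ^ (2 * P * D) *
          ((n + 1) ^ (P * D) * max 1 F ^ (P * D)) := by
        gcongr ?_ * _
        exact factorial_mul_pow_le_noCommonDivisorPermCount_mul hcop hm hP hD t
    _ ≤ noCommonDivisorPermCount m n * (n + 1) ^ (2 * P * D) *
          ((n + 1) ^ (P * D) * max 1 F ^ (P * D)) := by gcongr
    _ = _ := by ring

end Counting

theorem kCoprimePermCount_asymptotic_general {ι : Type*} [Fintype ι] {m : ι → ℕ}
    (hcop : Pairwise (Function.onFun Nat.Coprime m)) (hm : ∀ i, 2 ≤ m i) :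
    ∃ K, 0 < K ∧ ∀ n, 2 ≤ n →
      n ! * (∏ i, growthFactor (m i)) ^ n * exp (-K * log n) ≤ noCommonDivisorPermCount m n ∧
        noCommonDivisorPermCount m n ≤ n ! * (∏ i, growthFactor (m i)) ^ n * exp (K * log n) := by
  obtain ⟨c₁, N₁, lower⟩ := exists_le_noCommonDivisorPermCount_mul hcop hm
  obtain ⟨c₂, N₂, upper⟩ := exists_noCommonDivisorPermCount_le hcop hm
  obtain ⟨K₁, hK₁⟩ := exists_mul_pow_le_exp_mul_log c₁ N₁
  obtain ⟨K₂, hK₂⟩ := exists_mul_pow_le_exp_mul_log c₂ N₂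
  have product_nonneg : 0 ≤ ∏ i, growthFactor (m i) :=
    prod_nonneg fun i _ => (growthFactor_pos (hm i)).le
  refine ⟨max 1 (max K₁ K₂), by positivity, fun n hn => ⟨?_, ?_⟩⟩
  · rw [neg_mul, exp_neg, ← div_eq_mul_inv, div_le_iff₀ (exp_pos _)]
    exact (lower n).trans (mul_le_mul_of_nonneg_left (hK₁ _ (by simp) n hn) (Nat.cast_nonneg _))
  · exact (upper n (two_pos.trans_le hn)).trans
      (mul_le_mul_of_nonneg_left (hK₂ _ (by simp) n hn) (by positivity))

theorem pairwise_coprime_coe {s : Finset ℕ} (hs : ∀ p ∈ s, p.Prime) :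
    Pairwise (Function.onFun Nat.Coprime fun p : s => (p : ℕ)) := fun p q h =>
  (Nat.coprime_primes (hs p p.2) (hs q q.2)).2 (Subtype.coe_ne_coe.2 h)

theorem gcd_factorial_eq_one_iff {a k : ℕ} :
    a.gcd k ! = 1 ↔ ∀ p ∈ filter Nat.Prime (range (k + 1)), ¬p ∣ a := by
  simp only [mem_filter, mem_range, Nat.lt_succ_iff]
  constructor
  · exact fun h p hp hpa => Nat.not_coprime_of_dvd_of_dvd hp.2.one_lt hpa
      (hp.2.dvd_factorial.2 hp.1) h
  · exact fun h => Nat.coprime_of_dvd fun p hp hpa hpk => h p ⟨hp.dvd_factorial.1 hpk, hp⟩ hpa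

theorem kCoprimePermCount_eq_noCommonDivisorPermCount (k n : ℕ) :
    kCoprimePermCount k n =
      noCommonDivisorPermCount (fun p : filter Nat.Prime (range (k + 1)) => (p : ℕ)) n := by
  refine Nat.card_congr (subtypeEquivRight fun σ => forall_congr' fun ℓ => ?_)
  simp only [gcd_factorial_eq_one_iff, Nat.dvd_gcd_iff, NoCommonDivisor, Subtype.forall]

/-- For fixed `k ≥ 2`,
`C_k(n) = n!·(∏_{p ≤ k} (p−1)^{2(1−1/p)}/(p·(p−2)^{1−2/p}))^n · exp(O(log n))`,
with the factor at `p = 2` interpreted as `1/2` (real powers, `(0:ℝ)^(0:ℝ) = 1`). -/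
theorem kCoprimePermCount_asymptotic :
    ∀ k : ℕ, 2 ≤ k → ∃ K : ℝ, 0 < K ∧ ∀ n : ℕ, 2 ≤ n →
      (n.factorial : ℝ) *
          (∏ p ∈ Finset.filter Nat.Prime (Finset.range (k + 1)),
            ((p : ℝ) - 1) ^ (2 * (1 - 1 / (p : ℝ))) /
              ((p : ℝ) * ((p : ℝ) - 2) ^ (1 - 2 / (p : ℝ)))) ^ n *
          Real.exp (-K * Real.log n)
        ≤ (kCoprimePermCount k n : ℝ) ∧
      (kCoprimePermCount k n : ℝ) ≤
        (n.factorial : ℝ) *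
          (∏ p ∈ Finset.filter Nat.Prime (Finset.range (k + 1)),
            ((p : ℝ) - 1) ^ (2 * (1 - 1 / (p : ℝ))) /
              ((p : ℝ) * ((p : ℝ) - 2) ^ (1 - 2 / (p : ℝ)))) ^ n *
          Real.exp (K * Real.log n) := by
  intro k _
  have primes (p) (hp : p ∈ filter Nat.Prime (range (k + 1))) : p.Prime := (mem_filter.1 hp).2
  have := kCoprimePermCount_asymptotic_general (pairwise_coprime_coe primes) fun p =>
    (primes p p.2).two_le
  simp only [kCoprimePermCount_eq_noCommonDivisorPermCount]
  rwa [prod_coe_sort _ growthFactor] at this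
end
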